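/- arXiv:2501.11303 — 3 statements merged into one kernel-verified Lean document; each statement's English description precedes it below -/
import Mathlib

section
/- Let k=(k_1,…,k_r) be a composition, let m be a positive integer, and let α∈ℂ∖ℕ with ℜ(α)<1. Then ∫_0^1 A(k;x)·log^m((1−x)/(1+x))/(x·((1−x)/(1+x))^α) dx = (−1)^m·(d^m/dα^m) T((←k^∨)_+; 1−α), the m-th derivative of the function α ↦ T((←k^∨)_+; 1−α). -/
open scoped BigOperators
open MeasureTheory

/-- Multiple polylogarithm `Li_k(z) = Σ_{n₁>⋯>n_r>0} z^{n₁}/(n₁^{k₁}⋯n_r^{k_r})`. -/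
noncomputable def MPL (k : List ℕ) (z : ℝ) : ℝ :=
  if h : 0 < k.length then
    ∑' n : {n : Fin k.length → ℕ // StrictAnti n ∧ ∀ i, 0 < n i},
      z ^ (n.1 ⟨0, h⟩) / ∏ i, (n.1 i : ℝ) ^ k.get i
  else 1

/-- Level-two multiple polylogarithm
`A(k;x) = 2^r Σ_{n₁>⋯>n_r>0, n_j ≡ r+1-j (mod 2)} x^{n₁}/(n₁^{k₁}⋯n_r^{k_r})`. -/
noncomputable def AFn (k : List ℕ) (x : ℝ) : ℝ :=
  if h : 0 < k.length then
    2 ^ k.length *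
      ∑' n : {n : Fin k.length → ℕ //
          StrictAnti n ∧ (∀ i, 0 < n i) ∧ ∀ i, n i % 2 = (k.length - i.val) % 2},
        x ^ (n.1 ⟨0, h⟩) / ∏ i, (n.1 i : ℝ) ^ k.get i
  else 1

/-- Multiple zeta value `ζ(k) = Σ_{n₁>⋯>n_r>0} ∏ 1/n_i^{k_i}`. -/
noncomputable def MZV (k : List ℕ) : ℝ :=
  ∑' n : {n : Fin k.length → ℕ // StrictAnti n ∧ ∀ i, 0 < n i},
    ∏ i, 1 / (n.1 i : ℝ) ^ k.get i

/-- Multiple zeta star value `ζ⋆(k) = Σ_{n₁≥⋯≥n_r>0} ∏ 1/n_i^{k_i}`. -/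
noncomputable def MZSV (k : List ℕ) : ℝ :=
  ∑' n : {n : Fin k.length → ℕ // Antitone n ∧ ∀ i, 0 < n i},
    ∏ i, 1 / (n.1 i : ℝ) ^ k.get i

/-- Multiple T-value `T(k) = 2^r Σ_{n₁>⋯>n_r>0, n_j ≡ r+1-j (mod 2)} ∏ 1/n_i^{k_i}`. -/
noncomputable def MTV (k : List ℕ) : ℝ :=
  2 ^ k.length *
    ∑' n : {n : Fin k.length → ℕ //
        StrictAnti n ∧ (∀ i, 0 < n i) ∧ ∀ i, n i % 2 = (k.length - i.val) % 2},
      ∏ i, 1 / (n.1 i : ℝ) ^ k.get i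

/-- Hurwitz-type multiple zeta value `ζ(k;α) = Σ_{n₁>⋯>n_r>0} ∏ (n_i+α-1)^{-k_i}`. -/
noncomputable def HMZV (k : List ℕ) (α : ℂ) : ℂ :=
  ∑' n : {n : Fin k.length → ℕ // StrictAnti n ∧ ∀ i, 0 < n i},
    ∏ i, ((n.1 i : ℂ) + α - 1) ^ (-(k.get i : ℤ))

/-- Hurwitz-type multiple zeta star value `ζ⋆(k;α) = Σ_{n₁≥⋯≥n_r>0} ∏ (n_i+α-1)^{-k_i}`. -/
noncomputable def HMZSV (k : List ℕ) (α : ℂ) : ℂ :=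
  ∑' n : {n : Fin k.length → ℕ // Antitone n ∧ ∀ i, 0 < n i},
    ∏ i, ((n.1 i : ℂ) + α - 1) ^ (-(k.get i : ℤ))

/-- Hurwitz-type multiple T-value
`T(k;α) = Σ_{m₁>⋯>m_r>0} 2^r ∏_i (2m_i - r - 2 + i + α)^{-k_i}` (1-indexed `i`). -/
noncomputable def HMTV (k : List ℕ) (α : ℂ) : ℂ :=
  ∑' n : {n : Fin k.length → ℕ // StrictAnti n ∧ ∀ i, 0 < n i},
    2 ^ k.length *
      ∏ i, (2 * (n.1 i : ℂ) - (k.length : ℂ) - 1 + (i.val : ℂ) + α) ^ (-(k.get i : ℤ))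

/-- The boolean word (sequence of bits between consecutive units) of a composition. -/
def toWord : List ℕ → List Bool
  | [] => []
  | [a] => List.replicate (a - 1) false
  | a :: b :: rest => List.replicate (a - 1) false ++ true :: toWord (b :: rest)

/-- The composition corresponding to a boolean word. -/
def fromWord : List Bool → List ℕ
  | [] => [1]
  | false :: w =>
    match fromWord w with
    | [] => [1]
    | a :: t => (a + 1) :: t
  | true :: w => 1 :: fromWord w

/-- Hoffman dual of a composition: swap commas and plus signs in
`k = (1+⋯+1, …, 1+⋯+1)`. -/
def HDual (k : List ℕ) : List ℕ := fromWord ((toWord k).map fun b => !b)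

/-- `k₊ = (k₁+1, k₂, …, k_r)`. -/
def plusOne : List ℕ → List ℕ
  | [] => []
  | a :: t => (a + 1) :: t

/-- `Refines l k` means the composition `k` can be obtained from `l`
by combining some consecutive parts of `l`, i.e. `l ⪰ k`. -/
inductive Refines : List ℕ → List ℕ → Prop
  | nil : Refines [] []
  | cons (b l k : List ℕ) : b ≠ [] → Refines l k → Refines (b ++ l) (b.sum :: k)

/-- Arakawa–Kaneko zeta function `ξ(s;k) = (1/Γ(s)) ∫_0^∞ t^{s-1}/(e^t-1) Li_k(1-e^{-t}) dt`. -/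
noncomputable def xiAK (s : ℂ) (k : List ℕ) : ℂ :=
  (1 / Complex.Gamma s) *
    ∫ t in Set.Ioi (0 : ℝ),
      (t : ℂ) ^ (s - 1) / ((Real.exp t : ℂ) - 1) * (MPL k (1 - Real.exp (-t)) : ℂ)

/-- Kaneko–Tsumura η-function `η(s;k) = (1/Γ(s)) ∫_0^∞ t^{s-1}/(1-e^t) Li_k(1-e^{t}) dt`. -/
noncomputable def etaKT (s : ℂ) (k : List ℕ) : ℂ :=
  (1 / Complex.Gamma s) *
    ∫ t in Set.Ioi (0 : ℝ),
      (t : ℂ) ^ (s - 1) / (1 - (Real.exp t : ℂ)) * (MPL k (1 - Real.exp t) : ℂ)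

/-- Kaneko–Tsumura ψ-function `ψ(s;k) = (1/Γ(s)) ∫_0^∞ t^{s-1} A(k; tanh(t/2))/sinh(t) dt`. -/
noncomputable def psiKT (s : ℂ) (k : List ℕ) : ℂ :=
  (1 / Complex.Gamma s) *
    ∫ t in Set.Ioi (0 : ℝ),
      (t : ℂ) ^ (s - 1) * ((AFn k (Real.tanh (t / 2)) / Real.sinh t : ℝ) : ℂ)

/-- Riemann zeta value `ζ(a) = Σ_{n>0} 1/n^a`. -/
noncomputable def zeta1 (a : ℕ) : ℝ := ∑' n : {n : ℕ // 0 < n}, 1 / (n.1 : ℝ) ^ a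

/-- Double zeta value `ζ(a,b) = Σ_{n₁>n₂>0} 1/(n₁^a n₂^b)`. -/
noncomputable def zeta2 (a b : ℕ) : ℝ :=
  ∑' p : {p : ℕ × ℕ // p.2 < p.1 ∧ 0 < p.2}, 1 / ((p.1.1 : ℝ) ^ a * (p.1.2 : ℝ) ^ b)

/-- Single T-value `T(a) = 2 Σ_{n>0 odd} 1/n^a`. -/
noncomputable def T1 (a : ℕ) : ℝ := 2 * ∑' n : {n : ℕ // 0 < n ∧ n % 2 = 1}, 1 / (n.1 : ℝ) ^ a

/-- Double T-value `T(a,b) = 4 Σ_{n₁>n₂>0, n₁ even, n₂ odd} 1/(n₁^a n₂^b)`. -/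
noncomputable def T2 (a b : ℕ) : ℝ :=
  4 * ∑' p : {p : ℕ × ℕ // p.2 < p.1 ∧ 0 < p.2 ∧ p.1 % 2 = 0 ∧ p.2 % 2 = 1},
    1 / ((p.1.1 : ℝ) ^ a * (p.1.2 : ℝ) ^ b)


open scoped ENNReal

/-- Nested sum operator attached to a composition. -/
noncomputable def SS (b : ℝ) : List ℕ → (ℕ → ℝ≥0∞) → ℝ≥0∞
  | [], h => h 0
  | a :: l, h => SS b l (fun M => ∑' j : ℕ,
      2 * ENNReal.ofReal ((((M + 1 + 2 * j : ℕ) : ℝ) - b)⁻¹) ^ a * h (M + 1 + 2 * j))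

lemma SS_congr (b : ℝ) (l : List ℕ) (hl : l ≠ []) (h h' : ℕ → ℝ≥0∞)
    (e : ∀ N, 0 < N → h N = h' N) : SS b l h = SS b l h' := by
  cases l with
  | nil => exact absurd rfl hl
  | cons a l =>
    simp only [SS]
    congr 1
    funext M
    refine tsum_congr fun j => ?_
    rw [e _ (by omega)]

lemma SS_plus (b : ℝ) (a : ℕ) (l : List ℕ) (h : ℕ → ℝ≥0∞) :
    SS b ((a + 1) :: l) h = SS b (a :: l) (fun N => ENNReal.ofReal (((N : ℝ) - b)⁻¹) * h N) := by
  simp only [SS]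
  congr 1
  funext M
  refine tsum_congr fun j => ?_
  ring

lemma SS_plusOne (b : ℝ) (l : List ℕ) (hl : l ≠ []) (h : ℕ → ℝ≥0∞) :
    SS b (plusOne l) h = SS b l (fun N => ENNReal.ofReal (((N : ℝ) - b)⁻¹) * h N) := by
  cases l with
  | nil => exact absurd rfl hl
  | cons a l => exact SS_plus b a l h

lemma SS_measurable {X : Type*} [MeasurableSpace X] (b : ℝ) (l : List ℕ) (h : X → ℕ → ℝ≥0∞)
    (hm : ∀ N, Measurable fun x => h x N) : Measurable fun x => SS b l (h x) := by
  induction l generalizing h with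
  | nil => exact hm 0
  | cons a l ih =>
    simp only [SS]
    apply ih
    intro N
    refine Measurable.tsum fun j => ?_
    exact (hm _).const_mul _

lemma SS_lintegral {X : Type*} [MeasurableSpace X] (μ : Measure X) (b : ℝ) (l : List ℕ)
    (h : X → ℕ → ℝ≥0∞) (hm : ∀ N, Measurable fun x => h x N) :
    SS b l (fun N => ∫⁻ x, h x N ∂μ) = ∫⁻ x, SS b l (h x) ∂μ := by
  induction l generalizing h with
  | nil => rfl
  | cons a l ih =>
    simp only [SS]
    rw [← ih]
    · congr 1
      funext M
      rw [lintegral_tsum]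
      · refine tsum_congr fun j => ?_
        rw [lintegral_const_mul _ (hm _)]
      · intro j
        exact ((hm _).const_mul _).aemeasurable
    · intro N
      refine Measurable.tsum fun j => ?_
      exact (hm _).const_mul _

lemma SS_mul (b : ℝ) (l : List ℕ) (h : ℕ → ℝ≥0∞) (c : ℝ≥0∞) :
    SS b l (fun N => h N * c) = SS b l h * c := by
  induction l generalizing h with
  | nil => rfl
  | cons a l ih =>
    simp only [SS]
    rw [← ih]
    congr 1
    funext M
    rw [← ENNReal.tsum_mul_right]
    refine tsum_congr fun j => ?_
    ring

/-- FTC in `lintegral` form for nonnegative derivatives. -/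
lemma ftc_lint (a b : ℝ) (hab : a ≤ b) (f f' : ℝ → ℝ) (hc : ContinuousOn f (Set.Icc a b))
    (hd : ∀ x ∈ Set.Ioo a b, HasDerivAt f (f' x) x) (hp : ∀ x ∈ Set.Ioo a b, 0 ≤ f' x) :
    ∫⁻ x in Set.Ioo a b, ENNReal.ofReal (f' x) = ENNReal.ofReal (f b - f a) := by
  have hi := intervalIntegral.integrableOn_deriv_of_nonneg hc hd hp
  have h2 := intervalIntegral.integral_eq_sub_of_hasDerivAt_of_le hab hc hd
    ((intervalIntegrable_iff_integrableOn_Ioc_of_le hab).2 hi)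
  rw [← h2, intervalIntegral.integral_of_le hab, integral_Ioc_eq_integral_Ioo,
    ofReal_integral_eq_lintegral_ofReal]
  · exact hi.mono_set Set.Ioo_subset_Ioc_self
  · exact (ae_restrict_iff' measurableSet_Ioo).2 (Filter.Eventually.of_forall hp)

lemma geom_odd (y : ℝ) (h0 : 0 ≤ y) (h1 : y < 1) (M : ℕ) :
    ∑' j : ℕ, ENNReal.ofReal (y ^ (M + 2 * j)) = ENNReal.ofReal (y ^ M / (1 - y ^ 2)) := by
  have h2 : y ^ 2 < 1 := by nlinarith
  have hs := (hasSum_geometric_of_lt_one (sq_nonneg y) h2).mul_left (y ^ M)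
  rw [← ENNReal.ofReal_tsum_of_nonneg (fun j => by positivity)]
  · congr 1
    rw [div_eq_mul_inv, ← hs.tsum_eq]
    refine tsum_congr fun j => ?_
    rw [pow_add, pow_mul]
  · refine hs.summable.congr fun j => ?_
    rw [pow_add, pow_mul]

noncomputable def gg (k : List ℕ) (x : ℝ) : ℝ≥0∞ := SS 0 k (fun N => ENNReal.ofReal (x ^ N))

lemma gg_meas (k : List ℕ) : Measurable (gg k) := by
  apply SS_measurable
  intro N
  fun_prop

lemma lint_pow (x : ℝ) (hx : 0 < x) (N : ℕ) :
    ∫⁻ y in Set.Ioo 0 x, ENNReal.ofReal (y ^ N)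
      = ENNReal.ofReal (((N + 1 : ℕ) : ℝ)⁻¹) * ENNReal.ofReal (x ^ (N + 1)) := by
  rw [← ENNReal.ofReal_mul (by positivity),
    ftc_lint 0 x hx.le (fun y => (((N + 1 : ℕ) : ℝ)⁻¹) * y ^ (N + 1)) (fun y => y ^ N)
    (by fun_prop)]
  · simp
  · intro y hy
    have := (hasDerivAt_pow (N + 1) y).const_mul (((N + 1 : ℕ) : ℝ)⁻¹)
    have h0 : ((N + 1 : ℕ) : ℝ) ≠ 0 := by positivity
    rwa [Nat.add_sub_cancel, ← mul_assoc, inv_mul_cancel₀ h0, one_mul] at this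
  · intro y hy
    have := hy.1
    positivity

lemma gg_one (k : List ℕ) (x : ℝ) (hx : 0 < x) (hx1 : x < 1) :
    gg (1 :: k) x = ∫⁻ y in Set.Ioo 0 x, gg k y * ENNReal.ofReal (2 / (1 - y ^ 2)) := by
  have : ∀ y, gg k y * ENNReal.ofReal (2 / (1 - y ^ 2)) =
      SS 0 k (fun N => ENNReal.ofReal (y ^ N) * ENNReal.ofReal (2 / (1 - y ^ 2))) := by
    intro y; rw [SS_mul]; rfl
  simp_rw [this]
  rw [← SS_lintegral]
  · unfold gg
    simp only [SS]
    congr 1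
    funext M
    have h1 : ∀ y ∈ Set.Ioo 0 x, ENNReal.ofReal (y ^ M) * ENNReal.ofReal (2 / (1 - y ^ 2))
        = ∑' j : ℕ, 2 * ENNReal.ofReal (y ^ (M + 2 * j)) := by
      intro y hy
      have hy0 := hy.1
      rw [ENNReal.tsum_mul_left, geom_odd y hy.1.le (hy.2.trans hx1),
        ← ENNReal.ofReal_mul (by positivity), show (2 : ℝ≥0∞) = ENNReal.ofReal 2 by simp,
        ← ENNReal.ofReal_mul (by positivity)]
      congr 1
      ring
    rw [setLIntegral_congr_fun measurableSet_Ioo h1, lintegral_tsum]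
    · refine tsum_congr fun j => ?_
      rw [lintegral_const_mul _ (by fun_prop), lint_pow x hx, sub_zero, pow_one,
        mul_assoc, show M + 2 * j + 1 = M + 1 + 2 * j by ring]
    · intro j; fun_prop
  · intro N; fun_prop

lemma gg_succ (a : ℕ) (k : List ℕ) (x : ℝ) (hx : 0 < x) :
    gg ((a + 1) :: k) x = ∫⁻ y in Set.Ioo 0 x, gg (a :: k) y * ENNReal.ofReal (1 / y) := by
  have : ∀ y, gg (a :: k) y * ENNReal.ofReal (1 / y) =
      SS 0 (a :: k) (fun N => ENNReal.ofReal (y ^ N) * ENNReal.ofReal (1 / y)) := by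
    intro y; rw [SS_mul]; rfl
  simp_rw [this]
  rw [← SS_lintegral]
  · unfold gg
    rw [SS_plus]
    apply SS_congr _ _ (by simp)
    intro N hN
    obtain ⟨N, rfl⟩ : ∃ n, N = n + 1 := ⟨N - 1, by omega⟩
    rw [sub_zero, ← lint_pow x hx]
    refine setLIntegral_congr_fun measurableSet_Ioo ?_
    intro y hy
    have hy0 := hy.1
    simp only
    rw [← ENNReal.ofReal_mul (by positivity)]
    congr 1
    field_simp
    ring
  · intro N; fun_prop

lemma tonelli (F w : ℝ → ℝ≥0∞) (hF : Measurable F) (hw : Measurable w) :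
    ∫⁻ x in Set.Ioo (0:ℝ) 1, (∫⁻ y in Set.Ioo 0 x, F y) * w x
      = ∫⁻ y in Set.Ioo (0:ℝ) 1, F y * ∫⁻ x in Set.Ioo y 1, w x := by
  have e1 : ∀ x : ℝ, x ∈ Set.Ioo (0:ℝ) 1 → (∫⁻ y in Set.Ioo 0 x, F y) * w x
      = ∫⁻ y in Set.Ioo (0:ℝ) 1, (Set.ofPred fun p : ℝ × ℝ => p.2 < p.1).indicator (fun p => F p.2 * w p.1) (x, y) := by
    intro x hx
    rw [← lintegral_mul_const _ hF]
    rw [← lintegral_indicator measurableSet_Ioo, ← lintegral_indicator measurableSet_Ioo]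
    congr 1
    funext y
    by_cases h1 : 0 < y <;> by_cases h2 : y < x <;> by_cases h3 : y < 1 <;>
      simp [Set.indicator, h1, h2, h3]
    have := hx.2; exfalso; linarith
  have e2 : ∀ y : ℝ, y ∈ Set.Ioo (0:ℝ) 1 → F y * (∫⁻ x in Set.Ioo y 1, w x)
      = ∫⁻ x in Set.Ioo (0:ℝ) 1, (Set.ofPred fun p : ℝ × ℝ => p.2 < p.1).indicator (fun p => F p.2 * w p.1) (x, y) := by
    intro y hy
    rw [← lintegral_const_mul _ hw]
    rw [← lintegral_indicator measurableSet_Ioo, ← lintegral_indicator measurableSet_Ioo]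
    congr 1
    funext x
    by_cases h1 : 0 < x <;> by_cases h2 : y < x <;> by_cases h3 : x < 1 <;>
      simp [Set.indicator, h1, h2, h3]
    have := hy.1; exfalso; linarith
  rw [setLIntegral_congr_fun measurableSet_Ioo e1, setLIntegral_congr_fun measurableSet_Ioo e2]
  rw [lintegral_lintegral_swap]
  apply Measurable.aemeasurable
  apply Measurable.indicator
  · fun_prop
  · exact measurableSet_lt measurable_snd measurable_fst

noncomputable def uu (x : ℝ) : ℝ := (1 - x) / (1 + x)

lemma uu_pos (x : ℝ) (h0 : 0 < x) (h1 : x < 1) : 0 < uu x := by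
  unfold uu
  have : 0 < 1 - x := by linarith
  positivity

lemma uu_lt (x : ℝ) (h0 : 0 < x) (h1 : x < 1) : uu x < 1 := by
  unfold uu
  rw [div_lt_one (by linarith)]
  linarith

lemma uu_meas : Measurable uu := by unfold uu; fun_prop

noncomputable def JJ (k : List ℕ) (s : ℝ) : ℝ≥0∞ :=
  ∫⁻ x in Set.Ioo (0:ℝ) 1, gg k x * ENNReal.ofReal (uu x ^ s * (2 / (1 - x ^ 2)))

noncomputable def KK (k : List ℕ) (s : ℝ) : ℝ≥0∞ :=
  ∫⁻ x in Set.Ioo (0:ℝ) 1, gg k x * ENNReal.ofReal (uu x ^ s * (1 / x))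

lemma wint (y s : ℝ) (hy : 0 ≤ y) (hy1 : y < 1) (hs : 0 < s) :
    ∫⁻ x in Set.Ioo y 1, ENNReal.ofReal (uu x ^ s * (2 / (1 - x ^ 2)))
      = ENNReal.ofReal (s⁻¹ * uu y ^ s) := by
  rw [ftc_lint y 1 hy1.le (fun x => -(s⁻¹ * uu x ^ s))]
  · congr 1
    simp [uu, Real.zero_rpow hs.ne']
  · have : ContinuousOn uu (Set.Icc y 1) := by
      unfold uu
      refine ContinuousOn.div (by fun_prop) (by fun_prop) ?_
      intro x hx
      have := hx.1
      linarith
    exact ((this.rpow_const fun x _ => Or.inr hs.le).const_smul s⁻¹).neg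
  · intro x hx
    have hx0 : 0 < x := lt_of_le_of_lt hy hx.1
    have hp := uu_pos x hx0 hx.2
    have h1 : HasDerivAt uu (((-1) * (1 + x) - (1 - x) * 1) / (1 + x) ^ 2) x := by
      exact ((hasDerivAt_id x).const_sub 1).div ((hasDerivAt_id x).const_add 1)
        (by simp; linarith)
    have h2 := ((h1.rpow_const (p := s) (Or.inl hp.ne')).const_mul s⁻¹).neg
    convert! h2 using 1
    rw [Real.rpow_sub_one hp.ne']
    have : 1 - x ≠ 0 := by linarith [hx.2]
    have : 1 + x ≠ 0 := by linarith
    have : 1 - x ^ 2 ≠ 0 := by nlinarith [hx.2]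
    generalize hA : uu x ^ s = A
    unfold uu
    field_simp
    ring
  · intro x hx
    have hx0 : 0 < x := lt_of_le_of_lt hy hx.1
    have hp := uu_pos x hx0 hx.2
    have : 0 < 1 - x ^ 2 := by nlinarith [hx.2]
    positivity

lemma w_meas (s : ℝ) : Measurable fun x : ℝ => ENNReal.ofReal (uu x ^ s * (2 / (1 - x ^ 2))) := by
  have := uu_meas
  fun_prop

lemma JJ_nil (s : ℝ) (hs : 0 < s) : JJ [] s = ENNReal.ofReal s⁻¹ := by
  unfold JJ gg
  simp only [SS, pow_zero, ENNReal.ofReal_one, one_mul]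
  rw [wint 0 s le_rfl one_pos hs]
  simp [uu]

lemma JJ_one (k : List ℕ) (s : ℝ) (hs : 0 < s) :
    JJ (1 :: k) s = ENNReal.ofReal s⁻¹ * JJ k s := by
  unfold JJ
  rw [setLIntegral_congr_fun measurableSet_Ioo
    (g := fun x => (∫⁻ y in Set.Ioo 0 x, gg k y * ENNReal.ofReal (2 / (1 - y ^ 2))) *
      ENNReal.ofReal (uu x ^ s * (2 / (1 - x ^ 2)))) (fun x hx => by
        simp only [gg_one k x hx.1 hx.2])]
  have hg := gg_meas k
  have hu := uu_meas
  rw [tonelli (fun y => gg k y * ENNReal.ofReal (2 / (1 - y ^ 2))) _ (by fun_prop) (w_meas s)]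
  rw [← lintegral_const_mul _ (by fun_prop)]
  refine setLIntegral_congr_fun measurableSet_Ioo ?_
  intro y hy
  have hp := uu_pos y hy.1 hy.2
  simp only
  rw [wint y s hy.1.le hy.2 hs, ENNReal.ofReal_mul (by positivity),
    ENNReal.ofReal_mul (by positivity)]
  ring

lemma JJ_succ (a : ℕ) (k : List ℕ) (s : ℝ) (hs : 0 < s) :
    JJ ((a + 1) :: k) s = ENNReal.ofReal s⁻¹ * KK (a :: k) s := by
  unfold JJ KK
  rw [setLIntegral_congr_fun measurableSet_Ioo
    (g := fun x => (∫⁻ y in Set.Ioo 0 x, gg (a :: k) y * ENNReal.ofReal (1 / y)) *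
      ENNReal.ofReal (uu x ^ s * (2 / (1 - x ^ 2)))) (fun x hx => by
        simp only [gg_succ a k x hx.1])]
  have hg := gg_meas (a :: k)
  have hu := uu_meas
  rw [tonelli (fun y => gg (a :: k) y * ENNReal.ofReal (1 / y)) _ (by fun_prop) (w_meas s)]
  rw [← lintegral_const_mul _ (by fun_prop)]
  refine setLIntegral_congr_fun measurableSet_Ioo ?_
  intro y hy
  have hp := uu_pos y hy.1 hy.2
  simp only
  rw [wint y s hy.1.le hy.2 hs, ENNReal.ofReal_mul (by positivity),
    ENNReal.ofReal_mul (by positivity)]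
  ring

lemma KK_sum (k : List ℕ) (s : ℝ) : KK k s = ∑' j : ℕ, 2 * JJ k (s + 1 + 2 * j) := by
  unfold JJ KK
  have hg := gg_meas k
  have hu := uu_meas
  have e0 : ∀ j : ℕ, 2 * ∫⁻ x in Set.Ioo (0:ℝ) 1, gg k x *
      ENNReal.ofReal (uu x ^ (s + 1 + 2 * (j:ℝ)) * (2 / (1 - x ^ 2))) =
      ∫⁻ x in Set.Ioo (0:ℝ) 1, 2 * (gg k x *
      ENNReal.ofReal (uu x ^ (s + 1 + 2 * (j:ℝ)) * (2 / (1 - x ^ 2)))) := fun j =>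
    (lintegral_const_mul 2 (by fun_prop)).symm
  simp_rw [e0]
  rw [← lintegral_tsum (fun j => by fun_prop)]
  refine setLIntegral_congr_fun measurableSet_Ioo ?_
  intro x hx
  have hp := uu_pos x hx.1 hx.2
  have hlt := uu_lt x hx.1 hx.2
  have hx0 := hx.1
  have h2 : 0 < 1 - x ^ 2 := by nlinarith [hx.2]
  simp only
  have e : ∀ j : ℕ, 2 * (gg k x * ENNReal.ofReal (uu x ^ (s + 1 + 2 * j) * (2 / (1 - x ^ 2))))
      = (gg k x * ENNReal.ofReal (2 * uu x ^ s * (2 / (1 - x ^ 2)))) *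
        ENNReal.ofReal (uu x ^ (1 + 2 * j)) := by
    intro j
    rw [mul_left_comm, mul_assoc, ← ENNReal.ofReal_mul (by positivity),
      show (2 : ℝ≥0∞) = ENNReal.ofReal 2 by simp, ← ENNReal.ofReal_mul (by positivity)]
    congr 2
    rw [show s + 1 + 2 * (j : ℝ) = s + ((1 + 2 * j : ℕ) : ℝ) by push_cast; ring,
      Real.rpow_add_natCast hp.ne']
    ring
  simp_rw [e]
  rw [ENNReal.tsum_mul_left, geom_odd (uu x) hp.le hlt, mul_assoc,
    ← ENNReal.ofReal_mul (by positivity)]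
  congr 2
  generalize uu x ^ s = A
  have h3 : 1 - uu x ^ 2 = 4 * x / (1 + x) ^ 2 := by
    unfold uu
    have : 1 + x ≠ 0 := by linarith
    field_simp
    ring
  rw [h3]
  unfold uu
  have : 1 + x ≠ 0 := by linarith
  field_simp
  ring

/-- One step of the dual construction. -/
def stepD (l : List ℕ) (c : Bool) : List ℕ := if c then plusOne l else 1 :: l

lemma plusOne_ne (l : List ℕ) (h : l ≠ []) : plusOne l ≠ [] := by
  cases l <;> simp_all [plusOne]

lemma SS_KK (b : ℝ) (hb : b < 1) (k l : List ℕ) :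
    SS b l (fun N => KK k ((N : ℝ) - b)) =
      SS b (1 :: l) (fun N => ENNReal.ofReal ((N : ℝ) - b) * JJ k ((N : ℝ) - b)) := by
  simp only [SS]
  congr 1
  funext M
  rw [KK_sum]
  refine tsum_congr fun j => ?_
  have hp : 0 < ((M + 1 + 2 * j : ℕ) : ℝ) - b := by
    push_cast
    have : (0:ℝ) ≤ M := by positivity
    have : (0:ℝ) ≤ j := by positivity
    linarith
  rw [pow_one, mul_assoc, ← mul_assoc (ENNReal.ofReal _), ← ENNReal.ofReal_mul (by positivity),
    inv_mul_cancel₀ hp.ne', ENNReal.ofReal_one, one_mul]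
  congr 2
  push_cast
  ring

lemma main_SS (b : ℝ) (hb : b < 1) (k : List ℕ) (hk : k ≠ []) (hp : ∀ a ∈ k, 0 < a) :
    ∀ l : List ℕ, l ≠ [] → SS b l (fun N => ENNReal.ofReal ((N : ℝ) - b) * JJ k ((N : ℝ) - b))
      = SS b (plusOne ((toWord k).foldl stepD l)) (fun _ => 1) := by
  have key : ∀ N : ℕ, 0 < N → 0 < (N : ℝ) - b := by
    intro N hN
    have : (1:ℝ) ≤ N := by exact_mod_cast hN
    linarith
  have cancel : ∀ (N : ℕ) (c : ℝ≥0∞), 0 < N →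
      ENNReal.ofReal ((N : ℝ) - b) * (ENNReal.ofReal ((N : ℝ) - b)⁻¹ * c) = c := by
    intro N c hN
    have := key N hN
    rw [← mul_assoc, ← ENNReal.ofReal_mul (by positivity), mul_inv_cancel₀ this.ne',
      ENNReal.ofReal_one, one_mul]
  have cancel' : ∀ (N : ℕ) (c : ℝ≥0∞), 0 < N →
      ENNReal.ofReal ((N : ℝ) - b)⁻¹ * (ENNReal.ofReal ((N : ℝ) - b) * c) = c := by
    intro N c hN
    rw [mul_left_comm, cancel N c hN]
  induction k with
  | nil => exact absurd rfl hk
  | cons a t ih =>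
    obtain ⟨n, rfl⟩ : ∃ n, a = n + 1 := ⟨a - 1, by have := hp a (by simp); omega⟩
    have ih' : t ≠ [] → _ := fun h => ih h (fun x hx => hp x (by simp [hx]))
    clear ih hk hp
    induction n with
    | zero =>
      intro l hl
      cases t with
      | nil =>
        simp only [toWord, zero_add, Nat.sub_self, List.replicate_zero, List.foldl_nil]
        rw [SS_plusOne b l hl]
        refine SS_congr _ _ hl _ _ fun N hN => ?_
        rw [JJ_one _ _ (key N hN), cancel N _ hN, JJ_nil _ (key N hN), mul_one]
      | cons c t =>
        simp only [toWord, zero_add, Nat.sub_self, List.replicate_zero, List.nil_append,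
          List.foldl_cons]
        rw [← ih' (by simp) _ (by simpa [stepD] using plusOne_ne l hl)]
        simp only [stepD, if_true]
        rw [SS_plusOne b l hl]
        refine SS_congr _ _ hl _ _ fun N hN => ?_
        rw [JJ_one _ _ (key N hN), cancel N _ hN, cancel' N _ hN]
    | succ n ihn =>
      intro l hl
      have hw : toWord ((n + 1 + 1) :: t) = false :: toWord ((n + 1) :: t) := by
        cases t <;> simp [toWord, List.replicate_succ]
      rw [hw, List.foldl_cons, ← ihn _ (by simp [stepD])]
      simp only [stepD, Bool.false_eq_true, if_false]
      rw [← SS_KK b hb]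
      refine SS_congr _ _ hl _ _ fun N hN => ?_
      rw [JJ_succ _ _ _ (key N hN), cancel N _ hN]

lemma fromWord_ne (w : List Bool) : fromWord w ≠ [] := by
  induction w with
  | nil => simp [fromWord]
  | cons c w ih =>
    cases c
    · simp only [fromWord]
      split <;> simp
    · simp [fromWord]

lemma fromWord_foldr (v : List Bool) :
    fromWord (v.map fun b => !b) = v.foldr (fun c l => stepD l c) [1] := by
  induction v with
  | nil => rfl
  | cons c v ih =>
    cases c
    · simp [fromWord, stepD, ih]
    · simp only [List.map_cons, Bool.not_true, fromWord, List.foldr_cons, ← ih]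
      have := fromWord_ne (v.map fun b => !b)
      cases h : fromWord (v.map fun b => !b) with
      | nil => exact absurd h this
      | cons a t => simp [stepD, plusOne]

lemma toWord_append (l : List ℕ) (hl : l ≠ []) (a : ℕ) :
    toWord (l ++ [a]) = toWord l ++ true :: List.replicate (a - 1) false := by
  induction l with
  | nil => exact absurd rfl hl
  | cons c t ih =>
    cases t with
    | nil => simp [toWord]
    | cons d t =>
      have := ih (by simp)
      simp only [List.cons_append, toWord] at this ⊢
      rw [this]
      simp

lemma toWord_reverse (k : List ℕ) : toWord k.reverse = (toWord k).reverse := by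
  induction k with
  | nil => rfl
  | cons a t ih =>
    cases t with
    | nil => simp [toWord]
    | cons d t =>
      rw [List.reverse_cons, toWord_append _ (by simp), ih]
      simp [toWord]

lemma HDual_eq (k : List ℕ) : HDual k.reverse = (toWord k).foldl stepD [1] := by
  rw [HDual, toWord_reverse, fromWord_foldr, List.foldr_reverse]

lemma KK_eq (b : ℝ) (hb : b < 1) (k : List ℕ) (hk : k ≠ []) (hp : ∀ a ∈ k, 0 < a) :
    KK k (-b) = SS b (plusOne (HDual k.reverse)) (fun _ => 1) := by
  rw [HDual_eq, ← main_SS b hb k hk hp [1] (by simp), ← SS_KK b hb k []]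
  simp [SS]

lemma tele (s : ℝ) (hs : 0 < s) :
    ∑' j : ℕ, ENNReal.ofReal (2 / (s + 1 + 2 * j) ^ 2) ≤ ENNReal.ofReal (1 / s) := by
  refine ENNReal.tsum_le_of_sum_range_le fun n => ?_
  rw [← ENNReal.ofReal_sum_of_nonneg (fun j _ => by positivity)]
  apply ENNReal.ofReal_le_ofReal
  have : ∑ j ∈ Finset.range n, 2 / (s + 1 + 2 * (j:ℝ)) ^ 2 ≤ 1 / s - 1 / (s + 2 * n) := by
    induction n with
    | zero => simp
    | succ n ih =>
      rw [Finset.sum_range_succ]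
      have : 2 / (s + 1 + 2 * (n:ℝ)) ^ 2 ≤ 1 / (s + 2 * n) - 1 / (s + 2 * ((n + 1 : ℕ) : ℝ)) := by
        push_cast
        rw [div_sub_div _ _ (by positivity) (by positivity), div_le_div_iff₀ (by positivity)
          (by positivity)]
        nlinarith
      linarith
  have h2 : 0 < 1 / (s + 2 * (n:ℝ)) := by positivity
  linarith

lemma KK_le (k : List ℕ) (C s0 s : ℝ) (hC : 0 ≤ C) (h0 : 0 < s0) (hs : s0 ≤ s)
    (h : ∀ s, s0 ≤ s → JJ k s ≤ ENNReal.ofReal (C / s ^ 2)) :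
    KK k s ≤ ENNReal.ofReal (C / s) := by
  have hsp : 0 < s := h0.trans_le hs
  rw [KK_sum]
  calc ∑' j : ℕ, 2 * JJ k (s + 1 + 2 * j)
      ≤ ∑' j : ℕ, ENNReal.ofReal C * ENNReal.ofReal (2 / (s + 1 + 2 * j) ^ 2) := by
        refine ENNReal.tsum_le_tsum fun j => ?_
        have hj : (0:ℝ) ≤ j := by positivity
        refine (mul_le_mul_right (h _ (by linarith)) 2).trans ?_
        rw [show (2 : ℝ≥0∞) = ENNReal.ofReal 2 by simp, ← ENNReal.ofReal_mul (by positivity),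
          ← ENNReal.ofReal_mul (by positivity)]
        apply le_of_eq
        congr 1
        ring
    _ ≤ ENNReal.ofReal C * ENNReal.ofReal (1 / s) := by
        rw [ENNReal.tsum_mul_left]
        exact mul_le_mul_right (tele s hsp) _
    _ = _ := by
        rw [← ENNReal.ofReal_mul hC]
        congr 1
        ring

lemma JJ_bound (s0 : ℝ) (h0 : 0 < s0) (k : List ℕ) (hk : k ≠ []) (hp : ∀ a ∈ k, 0 < a) :
    ∃ C : ℝ, 0 ≤ C ∧ ∀ s, s0 ≤ s → JJ k s ≤ ENNReal.ofReal (C / s ^ 2) := by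
  induction k with
  | nil => exact absurd rfl hk
  | cons a t ih =>
    obtain ⟨n, rfl⟩ : ∃ n, a = n + 1 := ⟨a - 1, by have := hp a (by simp); omega⟩
    have ih' : t ≠ [] → _ := fun h => ih h (fun x hx => hp x (by simp [hx]))
    clear ih hk hp
    induction n with
    | zero =>
      cases t with
      | nil =>
        refine ⟨1, by norm_num, fun s hs => ?_⟩
        have hsp : 0 < s := h0.trans_le hs
        rw [zero_add, JJ_one _ _ hsp, JJ_nil _ hsp, ← ENNReal.ofReal_mul (by positivity)]
        apply le_of_eq
        congr 1
        field_simp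
      | cons c t =>
        obtain ⟨C, hC, h⟩ := ih' (by simp)
        refine ⟨C / s0, by positivity, fun s hs => ?_⟩
        have hsp : 0 < s := h0.trans_le hs
        rw [zero_add, JJ_one _ _ hsp]
        refine (mul_le_mul_right (h s hs) _).trans ?_
        rw [← ENNReal.ofReal_mul (by positivity)]
        apply ENNReal.ofReal_le_ofReal
        have : s⁻¹ ≤ s0⁻¹ := inv_anti₀ h0 hs
        calc s⁻¹ * (C / s ^ 2) ≤ s0⁻¹ * (C / s ^ 2) := by gcongr
          _ = _ := by ring
    | succ n ihn =>
      obtain ⟨C, hC, h⟩ := ihn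
      refine ⟨C, hC, fun s hs => ?_⟩
      have hsp : 0 < s := h0.trans_le hs
      rw [JJ_succ _ _ _ hsp]
      refine (mul_le_mul_right (KK_le _ C s0 s hC h0 hs h) _).trans ?_
      rw [← ENNReal.ofReal_mul (by positivity)]
      apply le_of_eq
      congr 1
      field_simp

lemma KK_fin (b : ℝ) (hb : b < 1) (k : List ℕ) (hk : k ≠ []) (hp : ∀ a ∈ k, 0 < a) :
    KK k (-b) < ∞ := by
  obtain ⟨C, hC, h⟩ := JJ_bound (1 - b) (by linarith) k hk hp
  obtain ⟨q, hq, hq1, hq2⟩ : ∃ q : ℝ, 0 < q ∧ q ≤ 1 ∧ 2 * q ≤ 1 - b :=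
    ⟨min 1 ((1 - b) / 2), by simp; linarith, min_le_left _ _, by
      have := min_le_right (1:ℝ) ((1 - b) / 2); linarith⟩
  rw [KK_sum]
  calc ∑' j : ℕ, 2 * JJ k (-b + 1 + 2 * j)
      ≤ ∑' j : ℕ, ENNReal.ofReal (C / q ^ 2) * ENNReal.ofReal (2 / (1 + 1 + 2 * j) ^ 2) := by
        refine ENNReal.tsum_le_tsum fun j => ?_
        have hj : (0:ℝ) ≤ j := by positivity
        refine (mul_le_mul_right (h _ (by linarith)) 2).trans ?_
        rw [show (2 : ℝ≥0∞) = ENNReal.ofReal 2 by simp, ← ENNReal.ofReal_mul (by positivity),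
          ← ENNReal.ofReal_mul (by positivity)]
        apply ENNReal.ofReal_le_ofReal
        have h1 : q * (1 + 1 + 2 * j) ≤ -b + 1 + 2 * j := by nlinarith
        calc 2 * (C / (-b + 1 + 2 * (j:ℝ)) ^ 2) ≤ 2 * (C / (q * (1 + 1 + 2 * j)) ^ 2) := by
              gcongr
          _ = _ := by field_simp
    _ ≤ ENNReal.ofReal (C / q ^ 2) * ENNReal.ofReal (1 / 1) := by
        rw [ENNReal.tsum_mul_left]
        exact mul_le_mul_right (tele 1 one_pos) _
    _ < ∞ := ENNReal.mul_lt_top ENNReal.ofReal_lt_top ENNReal.ofReal_lt_top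

/-- Strictly decreasing positive sequences with prescribed parities. -/
abbrev DD (r : ℕ) : Type :=
  {n : Fin r → ℕ // StrictAnti n ∧ (∀ i, 0 < n i) ∧ ∀ i, n i % 2 = (r - i.val) % 2}

/-- Largest entry, `0` for the empty sequence. -/
def topF {r : ℕ} (n : Fin r → ℕ) : ℕ := if h : 0 < r then n ⟨0, h⟩ else 0

lemma topF_succ {r : ℕ} (n : Fin (r + 1) → ℕ) : topF n = n 0 := by simp [topF]

lemma le_topF {r : ℕ} (n : Fin r → ℕ) (h : StrictAnti n) (i : Fin r) : n i ≤ topF n := by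
  have hr : 0 < r := i.pos
  simp only [topF, hr, dif_pos]
  exact h.antitone (Fin.mk_le_of_le_val (Nat.zero_le _))

lemma topF_parity {r : ℕ} (n : DD r) : topF n.1 % 2 = r % 2 := by
  unfold topF
  split
  · simpa using n.2.2.2 ⟨0, by assumption⟩
  · have : r = 0 := by omega
    simp [this]

lemma cons_DD {r : ℕ} (t : DD r) (N : ℕ) (hN : topF t.1 < N) (hp : N % 2 = (r + 1) % 2) :
    StrictAnti (Fin.cons N t.1 : Fin (r + 1) → ℕ) ∧
      (∀ i, 0 < (Fin.cons N t.1 : Fin (r + 1) → ℕ) i) ∧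
      ∀ i, (Fin.cons N t.1 : Fin (r + 1) → ℕ) i % 2 = (r + 1 - i.val) % 2 := by
  refine ⟨?_, ?_, ?_⟩
  · intro i j hij
    obtain ⟨j, rfl⟩ : ∃ j', j = Fin.succ j' :=
      Fin.exists_succ_eq.2 (by rintro rfl; exact absurd hij (by simp)) |>.imp fun _ h => h.symm
    refine Fin.cases ?_ (fun i => ?_) i hij
    · intro _
      simpa using (le_topF t.1 t.2.1 j).trans_lt hN
    · intro hij
      simpa using t.2.1 (Fin.succ_lt_succ_iff.1 hij)
  · intro i
    refine Fin.cases ?_ (fun i => ?_) i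
    · simp; omega
    · simpa using t.2.2.1 i
  · intro i
    refine Fin.cases ?_ (fun i => ?_) i
    · simp [hp]
    · have := t.2.2.2 i
      simp [this]

lemma tail_DD {r : ℕ} (n : DD (r + 1)) :
    StrictAnti (Fin.tail n.1) ∧
      (∀ i, 0 < Fin.tail n.1 i) ∧
      ∀ i : Fin r, Fin.tail n.1 i % 2 = (r - i.val) % 2 := by
  refine ⟨fun i j h => n.2.1 (Fin.succ_lt_succ_iff.2 h), fun i => n.2.2.1 _, fun i => ?_⟩
  have := n.2.2.2 i.succ
  simpa [Fin.tail] using this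

lemma topF_tail_lt {r : ℕ} (n : DD (r + 1)) : topF (Fin.tail n.1) < n.1 0 := by
  unfold topF
  split
  · exact n.2.1 (Fin.succ_pos _)
  · exact n.2.2.1 0

/-- Splitting off the largest entry. -/
def DDequiv (r : ℕ) : DD r × ℕ ≃ DD (r + 1) where
  toFun p := ⟨Fin.cons (topF p.1.1 + 1 + 2 * p.2) p.1.1, cons_DD p.1 _ (by omega) (by
    have := topF_parity p.1; omega)⟩
  invFun n := (⟨Fin.tail n.1, tail_DD n⟩, (n.1 0 - topF (Fin.tail n.1) - 1) / 2)
  left_inv p := by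
    rcases p with ⟨t, j⟩
    simp only [Fin.tail_cons, Fin.cons_zero, Prod.mk.injEq, true_and]
    omega
  right_inv n := by
    apply Subtype.ext
    simp only
    have h1 := topF_tail_lt n
    have h2 := topF_parity ⟨Fin.tail n.1, tail_DD n⟩
    have h3 := n.2.2.2 0
    simp only [Fin.val_zero] at h2 h3
    rw [show topF (Fin.tail n.1) + 1 + 2 * ((n.1 0 - topF (Fin.tail n.1) - 1) / 2) = n.1 0 by omega]
    exact Fin.cons_self_tail n.1

lemma SS_expand (b : ℝ) (l : List ℕ) (h : ℕ → ℝ≥0∞) :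
    SS b l h = ∑' n : DD l.length,
      (∏ i, 2 * ENNReal.ofReal (((n.1 i : ℝ) - b)⁻¹) ^ l.get i) * h (topF n.1) := by
  induction l generalizing h with
  | nil =>
    have : Unique (DD ([] : List ℕ).length) :=
      ⟨⟨⟨Fin.elim0, fun i => i.elim0, fun i => i.elim0, fun i => i.elim0⟩⟩, fun n =>
        Subtype.ext (funext fun i => i.elim0)⟩
    rw [tsum_eq_single default (fun n hn => absurd (Subsingleton.elim _ _) hn)]
    simp [SS, topF]
  | cons a l ih =>
    rw [SS, ih]
    change _ = ∑' n : DD (l.length + 1), _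
    rw [← (DDequiv l.length).tsum_eq, ENNReal.tsum_prod']
    refine tsum_congr fun t => ?_
    rw [← ENNReal.tsum_mul_left]
    refine tsum_congr fun j => ?_
    have e : ((DDequiv l.length) (t, j)).1 = Fin.cons (topF t.1 + 1 + 2 * j) t.1 := rfl
    rw [e, topF_succ, Fin.cons_zero]
    have := Fin.prod_univ_succ (fun i : Fin (l.length + 1) => 2 * ENNReal.ofReal
      ((((Fin.cons (topF t.1 + 1 + 2 * j) t.1 : Fin (l.length + 1) → ℕ) i : ℝ) - b)⁻¹) ^
        (a :: l).get i)
    refine Eq.trans ?_ (congrArg (· * h (topF t.1 + 1 + 2 * j)) this.symm)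
    have e2 : ∀ i : Fin l.length, (a :: l).get i.succ = l.get i := fun i => rfl
    simp only [Fin.cons_zero, Fin.cons_succ, e2]
    rw [show (a :: l).get 0 = a from rfl]
    generalize (∏ i, 2 * ENNReal.ofReal ((t.1 i : ℝ) - b)⁻¹ ^ l.get i) = P
    ring

lemma AFn_eq (k : List ℕ) (hk : k ≠ []) (x : ℝ) (hx : 0 ≤ x) : AFn k x = (gg k x).toReal := by
  have hl : 0 < k.length := List.length_pos_iff.2 hk
  rw [AFn, dif_pos hl, gg, SS_expand, ENNReal.tsum_toReal_eq, ← tsum_mul_left]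
  · refine tsum_congr fun n => ?_
    rw [ENNReal.toReal_mul, ENNReal.toReal_ofReal (by positivity), ENNReal.toReal_prod]
    simp only [ENNReal.toReal_mul, ENNReal.toReal_pow, sub_zero]
    rw [Finset.prod_mul_distrib]
    simp only [ENNReal.toReal_ofNat, Finset.prod_const, Finset.card_univ, Fintype.card_fin]
    rw [show topF n.1 = n.1 ⟨0, hl⟩ by simp [topF, hl], div_eq_mul_inv, ← Finset.prod_inv_distrib,
      mul_assoc, mul_comm (x ^ _)]
    congr 2
    refine Finset.prod_congr rfl fun i _ => ?_
    rw [ENNReal.toReal_ofReal (by positivity), inv_pow]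
  · intro n
    refine ENNReal.mul_ne_top (ENNReal.prod_ne_top fun i _ => ?_) ENNReal.ofReal_ne_top
    exact ENNReal.mul_ne_top (by simp) (ENNReal.pow_ne_top ENNReal.ofReal_ne_top)

lemma gap {r : ℕ} (n : Fin r → ℕ) (h : StrictAnti n) (d : ℕ) :
    ∀ i j : Fin r, j.val = i.val + d → n j + d ≤ n i := by
  induction d with
  | zero => intro i j hij; rw [show j = i from Fin.ext (by simpa using hij)]; simp
  | succ d ih =>
    intro i j hij
    have h1 := ih i ⟨i.val + d, by omega⟩ rfl
    have h2 := h (show (⟨i.val + d, by omega⟩ : Fin r) < j from by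
      rw [Fin.lt_def]; simp; omega)
    omega

lemma gap0 {r : ℕ} (n : Fin r → ℕ) (h : StrictAnti n) (hp : ∀ i, 0 < n i) (i : Fin r) :
    r - i.val ≤ n i := by
  have h1 := gap n h (r - 1 - i.val) i ⟨r - 1, by have := i.2; omega⟩ (by have := i.2; simp only; omega)
  have h2 := hp ⟨r - 1, by have := i.2; omega⟩
  omega

/-- Reindexing of the sum defining `HMTV`. -/
def HHequiv (r : ℕ) : {n : Fin r → ℕ // StrictAnti n ∧ ∀ i, 0 < n i} ≃ DD r where
  toFun n := ⟨fun i => 2 * n.1 i - (r - i.val), by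
    refine ⟨?_, ?_, ?_⟩
    · intro i j hij
      have h1 := gap n.1 n.2.1 (j.val - i.val) i j (by rw [Fin.lt_def] at hij; omega)
      have h2 := gap0 n.1 n.2.1 n.2.2 i
      have h3 := gap0 n.1 n.2.1 n.2.2 j
      rw [Fin.lt_def] at hij
      simp only
      omega
    · intro i
      have h2 := gap0 n.1 n.2.1 n.2.2 i
      simp only
      omega
    · intro i
      have h2 := gap0 n.1 n.2.1 n.2.2 i
      simp only
      omega⟩
  invFun N := ⟨fun i => (N.1 i + (r - i.val)) / 2, by
    refine ⟨?_, ?_⟩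
    · intro i j hij
      have h1 := gap N.1 N.2.1 (j.val - i.val) i j (by rw [Fin.lt_def] at hij; omega)
      have h2 := N.2.2.2 i
      have h3 := N.2.2.2 j
      rw [Fin.lt_def] at hij
      simp only
      omega
    · intro i
      have h1 := N.2.2.1 i
      simp only
      omega⟩
  left_inv n := by
    apply Subtype.ext
    funext i
    have h2 := gap0 n.1 n.2.1 n.2.2 i
    simp only
    omega
  right_inv N := by
    apply Subtype.ext
    funext i
    have h2 := N.2.2.2 i
    simp only
    omega

lemma HMTV_eq (l : List ℕ) (β : ℂ) : HMTV l (1 - β) =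
    ∑' N : DD l.length, ∏ i, 2 * ((N.1 i : ℂ) - β) ^ (-(l.get i : ℤ)) := by
  rw [← (HHequiv l.length).tsum_eq, HMTV]
  refine tsum_congr fun n => ?_
  rw [Finset.prod_mul_distrib]
  simp only [Finset.prod_const, Finset.card_univ, Fintype.card_fin]
  congr 1
  refine Finset.prod_congr rfl fun i _ => ?_
  congr 1
  have h2 := gap0 n.1 n.2.1 n.2.2 i
  have e : ((HHequiv l.length) n).1 i = 2 * n.1 i - (l.length - i.val) := rfl
  rw [e, Nat.cast_sub (by omega), Nat.cast_sub i.2.le]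
  push_cast
  ring

/-- Real majorant. -/
noncomputable def maj (l : List ℕ) (b : ℝ) (N : DD l.length) : ℝ :=
  ∏ i, 2 * (((N.1 i : ℝ) - b)⁻¹) ^ l.get i

lemma DD_pos {r : ℕ} (N : DD r) (b : ℝ) (hb : b < 1) (i : Fin r) : 0 < (N.1 i : ℝ) - b := by
  have : (1:ℝ) ≤ N.1 i := by exact_mod_cast N.2.2.1 i
  linarith

lemma SS_maj (l : List ℕ) (b : ℝ) (hb : b < 1) :
    SS b l (fun _ => 1) = ∑' N : DD l.length, ENNReal.ofReal (maj l b N) := by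
  rw [SS_expand]
  refine tsum_congr fun N => ?_
  have := DD_pos N b hb
  rw [mul_one, maj, ENNReal.ofReal_prod_of_nonneg]
  · refine Finset.prod_congr rfl fun i _ => ?_
    have := this i
    rw [ENNReal.ofReal_mul (by norm_num), ENNReal.ofReal_pow (by positivity)]
    simp
  · intro i _
    have := this i
    positivity

lemma maj_nonneg (l : List ℕ) (b : ℝ) (hb : b < 1) (N : DD l.length) : 0 ≤ maj l b N := by
  refine Finset.prod_nonneg fun i _ => ?_
  have := DD_pos N b hb i
  positivity

lemma maj_summable (l : List ℕ) (b : ℝ) (hb : b < 1) (hf : SS b l (fun _ => 1) < ∞) :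
    Summable (maj l b) := by
  rw [SS_maj l b hb] at hf
  have := ENNReal.summable_toReal hf.ne
  refine this.congr fun N => ?_
  rw [ENNReal.toReal_ofReal (maj_nonneg l b hb N)]

lemma HMTV_real (l : List ℕ) (b : ℝ) (hb : b < 1) :
    HMTV l (1 - (b : ℂ)) = ((SS b l (fun _ => 1)).toReal : ℂ) := by
  rw [HMTV_eq, SS_maj l b hb, ENNReal.tsum_toReal_eq (fun _ => ENNReal.ofReal_ne_top),
    Complex.ofReal_tsum]
  refine tsum_congr fun N => ?_
  rw [ENNReal.toReal_ofReal (maj_nonneg l b hb N), maj]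
  push_cast
  refine Finset.prod_congr rfl fun i _ => ?_
  rw [zpow_neg, zpow_natCast, inv_pow]

lemma HMTV_diff (l : List ℕ) (b : ℝ) (hb : b < 1) (hf : SS b l (fun _ => 1) < ∞) :
    DifferentiableOn ℂ (fun β : ℂ => HMTV l (1 - β)) {β : ℂ | β.re < b} := by
  have e : (fun β : ℂ => HMTV l (1 - β)) = fun β =>
      ∑' N : DD l.length, ∏ i, 2 * ((N.1 i : ℂ) - β) ^ (-(l.get i : ℤ)) :=
    funext fun β => HMTV_eq l β
  have nle : ∀ (N : DD l.length) (i) (β : ℂ), β.re < b →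
      (N.1 i : ℝ) - b ≤ ‖(N.1 i : ℂ) - β‖ := by
    intro N i β hβ
    have h1 := Complex.re_le_norm ((N.1 i : ℂ) - β)
    simp only [Complex.sub_re, Complex.natCast_re] at h1
    linarith
  rw [e]
  refine Complex.differentiableOn_tsum_of_summable_norm (maj_summable l b hb hf) ?_
    (isOpen_lt Complex.continuous_re continuous_const) ?_
  · intro N β hβ
    apply DifferentiableAt.differentiableWithinAt
    refine DifferentiableAt.fun_finsetProd fun i _ => ?_
    refine DifferentiableAt.const_mul (DifferentiableAt.zpow (by fun_prop) (Or.inl ?_)) _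
    have := (DD_pos N b hb i).trans_le (nle N i β hβ)
    exact norm_pos_iff.1 this
  · intro N β hβ
    rw [norm_prod, maj]
    refine Finset.prod_le_prod (fun i _ => norm_nonneg _) fun i _ => ?_
    have h0 := DD_pos N b hb i
    have h1 := nle N i β hβ
    rw [norm_mul, zpow_neg, zpow_natCast, norm_inv, norm_pow, inv_pow]
    simp only [Complex.norm_ofNat]
    gcongr

/-- The measure with density `A(k;x)/x` on `(0,1)`. -/
noncomputable def muk (k : List ℕ) : Measure ℝ :=
  (volume.restrict (Set.Ioo (0:ℝ) 1)).withDensity (fun x => gg k x * ENNReal.ofReal (1 / x))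

noncomputable def XX (x : ℝ) : ℝ := -Real.log (uu x)

lemma XX_meas : Measurable XX := by
  have := uu_meas
  unfold XX
  fun_prop

lemma dens_meas (k : List ℕ) : Measurable (fun x => gg k x * ENNReal.ofReal (1 / x)) := by
  have := gg_meas k
  fun_prop

lemma lint_exp (k : List ℕ) (t : ℝ) :
    ∫⁻ x, ENNReal.ofReal (Real.exp (t * XX x)) ∂(muk k) = KK k (-t) := by
  have := XX_meas
  rw [muk, lintegral_withDensity_eq_lintegral_mul _ (dens_meas k) (by fun_prop), KK]
  refine setLIntegral_congr_fun measurableSet_Ioo ?_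
  intro x hx
  have hp := uu_pos x hx.1 hx.2
  have h0 := hx.1
  simp only [Pi.mul_apply]
  rw [mul_assoc, ← ENNReal.ofReal_mul (by positivity), Real.rpow_def_of_pos hp, mul_comm (1 / x)]
  congr 4
  unfold XX
  ring

lemma int_exp (k : List ℕ) (hk : k ≠ []) (hp : ∀ a ∈ k, 0 < a) (t : ℝ) (ht : t < 1) :
    Integrable (fun x => Real.exp (t * XX x)) (muk k) := by
  have := XX_meas
  refine ⟨by fun_prop, ?_⟩
  rw [hasFiniteIntegral_iff_ofReal (Filter.Eventually.of_forall fun x => (Real.exp_pos _).le),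
    lint_exp]
  exact KK_fin t ht k hk hp

lemma mgf_real (k : List ℕ) (hk : k ≠ []) (hp : ∀ a ∈ k, 0 < a) (t : ℝ) (ht : t < 1) :
    ProbabilityTheory.complexMGF XX (muk k) (t : ℂ) =
      HMTV (plusOne (HDual k.reverse)) (1 - (t : ℂ)) := by
  have := XX_meas
  rw [ProbabilityTheory.complexMGF_ofReal, HMTV_real _ t ht, ← KK_eq t ht k hk hp,
    ProbabilityTheory.mgf, integral_eq_lintegral_of_nonneg_ae
      (Filter.Eventually.of_forall fun x => (Real.exp_pos _).le) (by fun_prop), lint_exp]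

lemma mem_int (k : List ℕ) (hk : k ≠ []) (hp : ∀ a ∈ k, 0 < a) (t : ℝ) (ht : t < 1) :
    t ∈ interior (ProbabilityTheory.integrableExpSet XX (muk k)) := by
  refine mem_interior.2 ⟨Set.Iio 1, ?_, isOpen_Iio, ht⟩
  intro s hs
  exact int_exp k hk hp s hs

lemma mgf_complex (k : List ℕ) (hk : k ≠ []) (hp : ∀ a ∈ k, 0 < a) (b : ℝ) (hb : b < 1) :
    Set.EqOn (ProbabilityTheory.complexMGF XX (muk k))
      (fun β => HMTV (plusOne (HDual k.reverse)) (1 - β)) {β : ℂ | β.re < b} := by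
  have ho : IsOpen {β : ℂ | β.re < b} := isOpen_lt Complex.continuous_re continuous_const
  have hX : AnalyticOnNhd ℂ (ProbabilityTheory.complexMGF XX (muk k)) {β : ℂ | β.re < b} :=
    ProbabilityTheory.analyticOnNhd_complexMGF.mono fun z hz =>
      mem_int k hk hp z.re (lt_trans hz hb)
  have hY := (HMTV_diff (plusOne (HDual k.reverse)) b hb
    (by rw [← KK_eq b hb k hk hp]; exact KK_fin b hb k hk hp)).analyticOnNhd ho
  refine AnalyticOnNhd.eqOn_of_preconnected_of_frequently_eq hX hY
    (convex_halfSpace_re_lt b).isPreconnected (z₀ := ((b - 1 : ℝ) : ℂ)) (by simp) ?_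
  have h_real : ∃ᶠ (x : ℝ) in nhdsWithin (b - 1) {b - 1}ᶜ,
      ProbabilityTheory.complexMGF XX (muk k) (x : ℂ) =
        (fun β => HMTV (plusOne (HDual k.reverse)) (1 - β)) (x : ℂ) := by
    apply Filter.Eventually.frequently
    have : ∀ᶠ x in nhds (b - 1), x < 1 := eventually_lt_nhds (by linarith)
    filter_upwards [nhdsWithin_le_nhds this] with x hx
    exact mgf_real k hk hp x hx
  rw [Filter.frequently_iff_seq_forall] at h_real ⊢
  obtain ⟨xs, hx_tendsto, hx_eq⟩ := h_real
  refine ⟨fun n ↦ xs n, ?_, fun n ↦ ?_⟩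
  · rw [tendsto_nhdsWithin_iff] at hx_tendsto ⊢
    constructor
    · exact (Complex.continuous_ofReal.tendsto _).comp hx_tendsto.1
    · filter_upwards [hx_tendsto.2] with n hn h
      exact hn (Complex.ofReal_injective h)
  · simp [hx_eq]

theorem stmt5 (k : List ℕ) (hk : k ≠ []) (hkpos : ∀ a ∈ k, 0 < a)
    (m : ℕ) (hm : 0 < m) (α : ℂ) (hα : ∀ j : ℕ, 0 < j → α ≠ (j : ℂ)) (hre : α.re < 1) :
    (∫ x in (0:ℝ)..1,
        ((AFn k x * Real.log ((1 - x) / (1 + x)) ^ m : ℝ) : ℂ) /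
          ((x : ℂ) * (((1 - x) / (1 + x) : ℝ) : ℂ) ^ α)) =
      (-1) ^ m *
        iteratedDeriv m (fun β : ℂ => HMTV (plusOne (HDual k.reverse)) (1 - β)) α := by
  obtain ⟨b, hb1, hb2⟩ := exists_between hre
  have ho : IsOpen {β : ℂ | β.re < b} := isOpen_lt Complex.continuous_re continuous_const
  have hev : (fun β : ℂ => HMTV (plusOne (HDual k.reverse)) (1 - β)) =ᶠ[nhds α]
      ProbabilityTheory.complexMGF XX (muk k) := by
    filter_upwards [ho.mem_nhds hb1] with β hβ
    exact (mgf_complex k hk hkpos b hb2 hβ).symm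
  rw [hev.iteratedDeriv_eq m,
    ProbabilityTheory.iteratedDeriv_complexMGF (mem_int k hk hkpos α.re hre), muk,
    integral_withDensity_eq_integral_toReal_smul (dens_meas k), ← integral_const_mul,
    intervalIntegral.integral_of_le zero_le_one, integral_Ioc_eq_integral_Ioo]
  · refine setIntegral_congr_fun measurableSet_Ioo ?_
    intro x hx
    have hp := uu_pos x hx.1 hx.2
    have h0 := hx.1
    simp only
    rw [AFn_eq k hk x hx.1.le, ENNReal.toReal_mul, ENNReal.toReal_ofReal (by positivity)]
    change _ / (_ * ((uu x : ℝ) : ℂ) ^ α) = _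
    change (((gg k x).toReal * Real.log (uu x) ^ m : ℝ) : ℂ) / _ = _
    rw [Complex.cpow_def_of_ne_zero (by exact_mod_cast hp.ne'), ← Complex.ofReal_log hp.le]
    have e1 : Complex.exp (α * (XX x : ℂ)) = (Complex.exp ((Real.log (uu x) : ℂ) * α))⁻¹ := by
      rw [← Complex.exp_neg]
      congr 1
      simp only [XX]
      push_cast
      ring
    rw [e1, Complex.real_smul]
    have e2 : (XX x : ℂ) ^ m = (-1) ^ m * (Real.log (uu x) : ℂ) ^ m := by
      rw [← mul_pow]; congr 1; simp only [XX]; push_cast; ring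
    have e3 : ((-1 : ℂ) ^ m) * (-1) ^ m = 1 := by rw [← mul_pow]; simp
    rw [e2]
    push_cast
    have : (x : ℂ) ≠ 0 := by exact_mod_cast h0.ne'
    rw [div_eq_mul_inv, mul_inv]
    linear_combination (-((gg k x).toReal : ℂ) * (Real.log (uu x) : ℂ) ^ m * (x : ℂ)⁻¹ *
      (Complex.exp ((Real.log (uu x) : ℂ) * α))⁻¹) * e3
  · have h := KK_fin 0 one_pos k hk hkpos
    have h2 : ∫⁻ x in Set.Ioo (0:ℝ) 1, gg k x * ENNReal.ofReal (1 / x) ≠ ∞ := by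
      simpa [KK] using h.ne
    exact ae_lt_top (dens_meas k) h2
end

section
/- Let k=(k_1,…,k_r) be a composition, let m∈ℕ_0, and set n=|k|+1−dep(k). Then ξ(m+1;k) = Σ_{|j|=m, dep(j)=n} B((←k^∨)_+; j)·ζ((←k^∨)_+ + j), where the sum is over j∈ℕ_0^n with j_1+⋯+j_n=m. -/
open scoped BigOperators
open MeasureTheory

namespace AK

open scoped ENNReal

/-! ### Words -/

theorem fromWord_ne_nil (w : List Bool) : fromWord w ≠ [] := by
  induction w with
  | nil => simp [fromWord]
  | cons b w ih =>
    cases b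
    · simp only [fromWord]
      split <;> simp
    · simp [fromWord]

theorem fromWord_false (w : List Bool) : fromWord (false :: w) = plusOne (fromWord w) := by
  simp only [fromWord]
  rcases h : fromWord w with _ | ⟨a, t⟩
  · exact absurd h (fromWord_ne_nil w)
  · simp [plusOne]

theorem fromWord_true (w : List Bool) : fromWord (true :: w) = 1 :: fromWord w := rfl

theorem fromWord_append_true (w : List Bool) : fromWord (w ++ [true]) = fromWord w ++ [1] := by
  induction w with
  | nil => rfl
  | cons b w ih =>
    cases b
    · rw [List.cons_append, fromWord_false, fromWord_false, ih]
      rcases h : fromWord w with _ | ⟨a, t⟩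
      · exact absurd h (fromWord_ne_nil w)
      · simp [plusOne]
    · rw [List.cons_append, fromWord_true, fromWord_true, ih, List.cons_append]

theorem fromWord_append_false (w : List Bool) :
    (fromWord (w ++ [false])).reverse = plusOne (fromWord w).reverse := by
  induction w with
  | nil => rfl
  | cons b w ih =>
    cases b
    · rw [List.cons_append, fromWord_false, fromWord_false]
      rcases h : fromWord w with _ | ⟨a, t⟩
      · exact absurd h (fromWord_ne_nil w)
      rcases h' : fromWord (w ++ [false]) with _ | ⟨a', t'⟩
      · exact absurd h' (fromWord_ne_nil _)
      rw [h, h'] at ih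
      simp only [plusOne, List.reverse_cons] at ih ⊢
      rcases ht : t.reverse with _ | ⟨x, y⟩
      · rw [ht] at ih
        simp at ih ⊢
        have : t'.reverse = [] := by
          rcases ht' : t'.reverse with _ | ⟨x', y'⟩
          · rfl
          · rw [ht'] at ih; simp at ih
        rw [this] at ih
        simp at ih this
        simp [ih, this]
      · rw [ht] at ih
        simp only [List.cons_append] at ih ⊢
        rw [← List.cons_append] at ih ⊢
        have := List.append_inj' ih rfl
        simp at this
        simp [this.1, this.2]
    · rw [List.cons_append, fromWord_true, fromWord_true, List.reverse_cons, ih,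
        List.reverse_cons]
      rcases h : (fromWord w).reverse with _ | ⟨a, t⟩
      · exact absurd (List.reverse_eq_nil_iff.mp h) (fromWord_ne_nil w)
      · simp [plusOne]

theorem fromWord_reverse (w : List Bool) : fromWord w.reverse = (fromWord w).reverse := by
  induction w with
  | nil => rfl
  | cons b w ih =>
    cases b
    · rw [List.reverse_cons, fromWord_false]
      have := fromWord_append_false w.reverse
      rw [ih, List.reverse_reverse] at this
      rw [← this, List.reverse_reverse]
    · rw [List.reverse_cons, fromWord_append_true, ih, fromWord_true, List.reverse_cons]

theorem fromWord_pos (w : List Bool) : ∀ a ∈ fromWord w, 0 < a := by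
  induction w with
  | nil => simp [fromWord]
  | cons b w ih =>
    cases b
    · rw [fromWord_false]
      rcases h : fromWord w with _ | ⟨a, t⟩
      · exact absurd h (fromWord_ne_nil w)
      rw [h] at ih
      simp [plusOne] at ih ⊢
      exact ih.2
    · rw [fromWord_true]
      simpa using ih

theorem toWord_append (l : List ℕ) (hl : l ≠ []) (a : ℕ) :
    toWord (l ++ [a]) = toWord l ++ true :: List.replicate (a - 1) false := by
  induction l with
  | nil => exact absurd rfl hl
  | cons b l ih =>
    rcases l with _ | ⟨c, l⟩
    · simp [toWord]
    · have := ih (by simp)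
      simp only [List.cons_append, toWord] at this ⊢
      rw [this]
      simp

theorem toWord_reverse (l : List ℕ) : toWord l.reverse = (toWord l).reverse := by
  induction l with
  | nil => rfl
  | cons b l ih =>
    rcases l with _ | ⟨c, l⟩
    · simp [toWord]
    · rw [List.reverse_cons, toWord_append _ (by simp), ih]
      simp [toWord]

/-- The word of the iterated integral (outermost first). -/
def V : List ℕ → List Bool
  | [] => []
  | a :: ks => List.replicate (a - 1) true ++ false :: V ks

theorem V_eq (k : List ℕ) (hk : k ≠ []) : V k = (toWord k).map (fun b => !b) ++ [false] := by
  induction k with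
  | nil => exact absurd rfl hk
  | cons b l ih =>
    rcases l with _ | ⟨c, l⟩
    · simp [toWord, V]
    · have := ih (by simp)
      rw [V, this]
      simp [toWord]

theorem plusOne_HDual_reverse (k : List ℕ) (hk : k ≠ []) :
    plusOne (HDual k.reverse) = (fromWord (V k)).reverse := by
  rw [V_eq k hk, ← fromWord_reverse, List.reverse_append, List.reverse_singleton,
    List.singleton_append, fromWord_false, HDual, toWord_reverse, List.map_reverse]

theorem length_plusOne (l : List ℕ) : (plusOne l).length = l.length := by
  cases l <;> simp [plusOne]

theorem length_fromWord (w : List Bool) : (fromWord w).length = w.count true + 1 := by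
  induction w with
  | nil => rfl
  | cons b w ih =>
    cases b
    · rw [fromWord_false, length_plusOne, ih]; simp
    · rw [fromWord_true]; simp [ih]

theorem count_V (k : List ℕ) (hkpos : ∀ a ∈ k, 0 < a) :
    (V k).count true + k.length = k.sum := by
  induction k with
  | nil => rfl
  | cons b l ih =>
    have h1 := ih (fun a ha => hkpos a (by simp [ha]))
    have h2 := hkpos b (by simp)
    simp [V]
    omega

theorem length_D (k : List ℕ) (hkpos : ∀ a ∈ k, 0 < a) :
    (fromWord (V k)).length = k.sum + 1 - k.length := by
  rw [length_fromWord]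
  have := count_V k hkpos
  omega

/-! ### Chains -/

open Classical in
/-- Sum over chains. -/
noncomputable def Ch (r : ℕ → ℕ → Prop) (d : ℕ) (q : ℕ → Prop) (f : Fin d → ℕ → ℝ≥0∞) : ℝ≥0∞ :=
  ∑' n : Fin d → ℕ, if (∀ i, q (n i)) ∧ (∀ i j, i < j → r (n i) (n j)) then
    ∏ i, f i (n i) else 0

theorem Ch_zero (r : ℕ → ℕ → Prop) (q : ℕ → Prop) (f : Fin 0 → ℕ → ℝ≥0∞) : Ch r 0 q f = 1 := by
  unfold Ch
  rw [tsum_fintype]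
  simp

open Classical in
theorem Ch_succ (r : ℕ → ℕ → Prop) (d : ℕ) (q : ℕ → Prop) (f : Fin (d + 1) → ℕ → ℝ≥0∞) :
    Ch r (d + 1) q f = ∑' p : ℕ, if q p then
      f 0 p * Ch r d (fun x => q x ∧ r p x) (fun i => f i.succ) else 0 := by
  unfold Ch
  rw [← (Fin.consEquiv (fun _ => ℕ)).tsum_eq, ENNReal.tsum_prod']
  refine tsum_congr fun p => ?_
  by_cases hq : q p
  · rw [if_pos hq, ← ENNReal.tsum_mul_left]
    refine tsum_congr fun n => ?_
    simp only [Fin.consEquiv, Equiv.coe_fn_mk, Fin.forall_fin_succ, Fin.cons_zero, Fin.cons_succ,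
      Fin.prod_univ_succ, mul_ite, mul_zero]
    refine if_congr ?_ rfl rfl
    simp [hq, Fin.succ_pos]
    constructor
    · rintro ⟨h1, h2, h3⟩; exact ⟨fun i => ⟨h1 i, h2 i⟩, h3⟩
    · rintro ⟨h1, h3⟩; exact ⟨fun i => (h1 i).1, fun i => (h1 i).2, h3⟩
  · rw [if_neg hq]
    simp [Fin.consEquiv, Fin.forall_fin_succ, hq]

theorem Ch_congr {r : ℕ → ℕ → Prop} {d : ℕ} {q q' : ℕ → Prop} {f f' : Fin d → ℕ → ℝ≥0∞}
    (h : ∀ x, q x ↔ q' x) (hf : ∀ i x, f i x = f' i x) : Ch r d q f = Ch r d q' f' := by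
  have : q = q' := funext fun x => propext (h x)
  have h2 : f = f' := funext fun i => funext fun x => hf i x
  rw [this, h2]

/-- Sum over the sequences with last terms strictly below `N`. -/
noncomputable def S : List ℕ → ℕ → ℝ≥0∞
  | [], _ => 1
  | k :: ks, N => ∑' p : ℕ, if 0 < p ∧ p < N then ((p : ℝ≥0∞)⁻¹) ^ k * S ks p else 0

theorem Ch_S (ks : List ℕ) (N : ℕ) :
    Ch (fun a b => b < a) ks.length (fun x => 0 < x ∧ x < N)
      (fun i n => ((n : ℝ≥0∞)⁻¹) ^ ks.get i) = S ks N := by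
  induction ks generalizing N with
  | nil => exact Ch_zero _ _ _
  | cons k ks ih =>
    rw [S]
    refine (Ch_succ _ _ _ _).trans (tsum_congr fun p => ?_)
    by_cases h : 0 < p ∧ p < N
    · rw [if_pos h, if_pos h, ← ih]
      congr 1
      refine Ch_congr (fun x => ?_) (fun i x => rfl)
      omega
    · rw [if_neg h, if_neg h]

/-- polylog in `ℝ≥0∞`. -/
noncomputable def L : List ℕ → ℝ≥0∞ → ℝ≥0∞
  | [], _ => 1
  | k :: ks, z => ∑' p : ℕ, if 0 < p then z ^ p * ((p : ℝ≥0∞)⁻¹) ^ k * S ks p else 0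

theorem inv_pow_ne_top {p : ℕ} (hp : 0 < p) (k : ℕ) : ((p : ℝ≥0∞)⁻¹) ^ k ≠ ∞ :=
  ENNReal.pow_ne_top (ENNReal.inv_ne_top.mpr (by exact_mod_cast hp.ne'))

theorem Ch_toReal {r : ℕ → ℕ → Prop} {d : ℕ} (f : Fin d → ℕ → ℝ≥0∞)
    (hf : ∀ i p, 0 < p → f i p ≠ ∞) (p : (Fin d → ℕ) → Prop)
    (hp : ∀ n, p n ↔ (∀ i, 0 < n i) ∧ (∀ i j, i < j → r (n i) (n j))) :
    (Ch r d (fun x => 0 < x) f).toReal =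
      ∑' n : {n : Fin d → ℕ // p n}, ∏ i, (f i (n.1 i)).toReal := by
  classical
  unfold Ch
  rw [ENNReal.tsum_toReal_eq]
  · refine Eq.trans ?_ (tsum_subtype {n : Fin d → ℕ | p n}
      (fun n => ∏ i, (f i (n i)).toReal)).symm
    refine tsum_congr fun n => ?_
    by_cases h : p n
    · rw [if_pos ((hp n).mp h), Set.indicator_of_mem (by exact h), ENNReal.toReal_prod]
    · rw [if_neg (fun h' => h ((hp n).mpr h')), Set.indicator_of_notMem (by exact h)]
      rfl
  · intro n
    split_ifs with h
    · exact ENNReal.prod_ne_top fun i _ => hf i _ (h.1 i)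
    · simp

theorem strictAnti_iff' {d : ℕ} (n : Fin d → ℕ) : (StrictAnti n ∧ ∀ i, 0 < n i) ↔
    (∀ i, 0 < n i) ∧ (∀ i j, i < j → n j < n i) :=
  ⟨fun h => ⟨h.2, fun _ _ hij => h.1 hij⟩, fun h => ⟨fun i j hij => h.2 i j hij, h.1⟩⟩

theorem MPL_eq (k : List ℕ) (z : ℝ) (hz : 0 ≤ z) : MPL k z = (L k (ENNReal.ofReal z)).toReal := by
  rcases k with _ | ⟨k, ks⟩
  · simp [MPL, L]
  · have hL : L (k :: ks) (ENNReal.ofReal z) = Ch (fun a b => b < a) (ks.length + 1)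
        (fun x => 0 < x) (Fin.cons (fun p => (ENNReal.ofReal z) ^ p * ((p : ℝ≥0∞)⁻¹) ^ k)
          (fun i n => ((n : ℝ≥0∞)⁻¹) ^ ks.get i)) := by
      rw [L, Ch_succ]
      refine tsum_congr fun p => ?_
      split_ifs with h
      · rw [← Ch_S]
        rfl
      · rfl
    rw [hL, Ch_toReal _ _ _ strictAnti_iff']
    · rw [MPL, dif_pos (by simp)]
      simp only [List.length_cons]
      refine tsum_congr fun n => ?_
      rw [Fin.prod_univ_succ, Fin.prod_univ_succ]
      simp [ENNReal.toReal_ofReal hz, div_eq_mul_inv, mul_comm]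
      ring
    · intro i p hp
      refine Fin.cases ?_ (fun i => ?_) i
      · exact ENNReal.mul_ne_top (ENNReal.pow_ne_top ENNReal.ofReal_ne_top) (inv_pow_ne_top hp _)
      · exact inv_pow_ne_top hp _

theorem MZV_eq (l : List ℕ) (d : ℕ) (h : l.length = d) :
    MZV l = (Ch (fun a b => b < a) d (fun x => 0 < x)
      (fun i n => ((n : ℝ≥0∞)⁻¹) ^ l.getD (i : ℕ) 0)).toReal := by
  subst h
  rw [Ch_toReal _ (fun i p hp => inv_pow_ne_top hp _) _ strictAnti_iff', MZV]
  refine tsum_congr fun n => ?_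
  simp

theorem Ch_rev (r : ℕ → ℕ → Prop) (d : ℕ) (q : ℕ → Prop) (f : Fin d → ℕ → ℝ≥0∞) :
    Ch r d q f = Ch (fun a b => r b a) d q (fun i => f i.rev) := by
  classical
  unfold Ch
  rw [← (Equiv.arrowCongr Fin.revPerm (Equiv.refl ℕ)).tsum_eq]
  refine tsum_congr fun n => ?_
  have e : ∀ i, (Equiv.arrowCongr Fin.revPerm (Equiv.refl ℕ)) n i = n i.rev := fun i => by
    simp
  simp only [e]
  refine if_congr ?_ ?_ rfl
  · constructor
    · rintro ⟨h1, h2⟩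
      refine ⟨fun i => by simpa using h1 i.rev, fun i j hij => ?_⟩
      simpa using h2 j.rev i.rev (by simpa using hij)
    · rintro ⟨h1, h2⟩
      refine ⟨fun i => h1 i.rev, fun i j hij => ?_⟩
      exact h2 j.rev i.rev (by simpa using hij)
  · rw [← Equiv.prod_comp Fin.revPerm]
    simp

theorem sum_antidiagonalTuple_succ {M : Type*} [AddCommMonoid M] (d m : ℕ)
    (f : (Fin (d + 1) → ℕ) → M) :
    ∑ j ∈ Finset.Nat.antidiagonalTuple (d + 1) m, f j =
      ∑ p ∈ Finset.HasAntidiagonal.antidiagonal m, ∑ j ∈ Finset.Nat.antidiagonalTuple d p.2, f (Fin.cons p.1 j) := by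
  rw [Finset.sum_sigma']
  symm
  refine Finset.sum_bij' (fun x _ => Fin.cons x.1.1 x.2)
    (fun j _ => ⟨(j 0, ∑ i, Fin.tail j i), Fin.tail j⟩) ?_ ?_ ?_ ?_ ?_
  · rintro ⟨⟨a, b⟩, j⟩ h
    simp [Finset.Nat.mem_antidiagonalTuple, Fin.sum_univ_succ] at h ⊢
    omega
  · intro j h
    simp [Finset.Nat.mem_antidiagonalTuple, Fin.sum_univ_succ, Fin.tail] at h ⊢
    omega
  · rintro ⟨⟨a, b⟩, j⟩ h
    simp [Finset.Nat.mem_antidiagonalTuple] at h ⊢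
    omega
  · intro j h
    simp
  · intro x h
    rfl

/-- The sum over increasing sequences above `N`. -/
noncomputable def P : ℕ → ℕ → List ℕ → ℝ≥0∞
  | m, _, [] => if m = 0 then 1 else 0
  | m, N, c :: cs => ∑' n : ℕ, if N < n then ∑ p ∈ Finset.HasAntidiagonal.antidiagonal m,
      ((c + p.1 - 1).choose p.1 : ℝ≥0∞) * ((n : ℝ≥0∞)⁻¹) ^ (c + p.1) * P p.2 n cs else 0

theorem P_eq (cs : List ℕ) (m N : ℕ) :
    P m N cs = ∑ j ∈ Finset.Nat.antidiagonalTuple cs.length m,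
      ((∏ i, (cs.get i + j i - 1).choose (j i) : ℕ) : ℝ≥0∞) *
        Ch (fun a b => a < b) cs.length (fun x => N < x)
          (fun i n => ((n : ℝ≥0∞)⁻¹) ^ (cs.get i + j i)) := by
  induction cs generalizing m N with
  | nil =>
    cases m with
    | zero => simp [P, Ch_zero]
    | succ m => simp [P]
  | cons c cs ih =>
    rw [P]
    refine Eq.trans ?_ (sum_antidiagonalTuple_succ _ _ _).symm
    have h1 : ∀ p : ℕ × ℕ, ∀ j : Fin cs.length → ℕ,
      Ch (fun a b => a < b) (c :: cs).length (fun x => N < x)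
          (fun i n => ((n : ℝ≥0∞)⁻¹) ^ ((c :: cs).get i + (Fin.cons p.1 j : Fin (cs.length + 1) → ℕ) i))
      = ∑' n : ℕ, if N < n then ((n : ℝ≥0∞)⁻¹) ^ (c + p.1) *
          Ch (fun a b => a < b) cs.length (fun x => n < x)
            (fun i n => ((n : ℝ≥0∞)⁻¹) ^ (cs.get i + j i)) else 0 := by
      intro p j
      refine (Ch_succ _ _ _ _).trans (tsum_congr fun n => ?_)
      by_cases h : N < n
      · rw [if_pos h, if_pos h]
        congr 1
        refine Ch_congr (fun x => ?_) (fun i x => rfl)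
        omega
      · rw [if_neg h, if_neg h]
    simp only [h1, ← ENNReal.tsum_mul_left]
    have h2 : ∀ p : ℕ × ℕ, ∀ j : Fin cs.length → ℕ,
      (∏ i, ((c :: cs).get i + (Fin.cons p.1 j : Fin (cs.length + 1) → ℕ) i - 1).choose
        ((Fin.cons p.1 j : Fin (cs.length + 1) → ℕ) i) : ℕ) =
      (c + p.1 - 1).choose p.1 * ∏ i, (cs.get i + j i - 1).choose (j i) := by
      intro p j
      refine (Fin.prod_univ_succ _).trans ?_
      rfl
    simp only [List.length_cons] at h2 ⊢
    simp only [h2]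
    have h3 : ∀ (p : ℕ × ℕ) (F : (Fin cs.length → ℕ) → ℕ → ℝ≥0∞),
        ∑ j ∈ Finset.Nat.antidiagonalTuple cs.length p.2, ∑' n, F j n =
        ∑' n, ∑ j ∈ Finset.Nat.antidiagonalTuple cs.length p.2, F j n := fun p F =>
      (Summable.tsum_finsetSum (fun _ _ => ENNReal.summable)).symm
    simp only [h3]
    rw [← Summable.tsum_finsetSum (fun _ _ => ENNReal.summable)]
    refine tsum_congr fun n => ?_
    by_cases h : N < n
    · simp only [if_pos h]
      refine Finset.sum_congr rfl fun p _ => ?_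
      rw [ih, Finset.mul_sum]
      refine Finset.sum_congr rfl fun j _ => ?_
      push_cast
      ring
    · simp [h]

end AK

namespace AK

open scoped ENNReal
open Set Filter Topology

noncomputable def g (u : ℝ) : ℝ≥0∞ := ENNReal.ofReal (1 / (Real.exp u - 1))
noncomputable def zt (u : ℝ) : ℝ≥0∞ := ENNReal.ofReal (1 - Real.exp (-u))
noncomputable def F (k : List ℕ) (t : ℝ) : ℝ≥0∞ := L k (zt t)
noncomputable def φ (m n : ℕ) (t : ℝ) : ℝ≥0∞ :=
  ENNReal.ofReal (t ^ m / (m.factorial : ℝ) * Real.exp (-(n * t)))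

@[fun_prop]
theorem measurable_g : Measurable g := by unfold g; fun_prop
@[fun_prop]
theorem measurable_zt : Measurable zt := by unfold zt; fun_prop
@[fun_prop]
theorem measurable_φ (m n : ℕ) : Measurable (φ m n) := by unfold φ; fun_prop
@[fun_prop]
theorem measurable_F (k : List ℕ) : Measurable (F k) := by
  unfold F
  rcases k with _ | ⟨k, ks⟩
  · simp only [L]; fun_prop
  · simp only [L]
    refine Measurable.tsum fun p => ?_
    split_ifs <;> fun_prop

theorem one_sub_exp_pos {u : ℝ} (hu : 0 < u) : 0 < 1 - Real.exp (-u) := by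
  have : Real.exp (-u) < 1 := Real.exp_lt_one_iff.mpr (by linarith)
  linarith

theorem exp_sub_one_pos {u : ℝ} (hu : 0 < u) : 0 < Real.exp u - 1 := by
  have : 1 < Real.exp u := Real.one_lt_exp_iff.mpr hu
  linarith

theorem g_eq {u : ℝ} (hu : 0 < u) :
    1 / (Real.exp u - 1) = Real.exp (-u) / (1 - Real.exp (-u)) := by
  have h1 := exp_sub_one_pos hu
  have h2 := one_sub_exp_pos hu
  rw [div_eq_div_iff h1.ne' h2.ne', Real.exp_neg]
  field_simp

theorem zt_pow_g {u : ℝ} (hu : 0 < u) (p : ℕ) :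
    zt u ^ (p + 1) * g u = ENNReal.ofReal ((1 - Real.exp (-u)) ^ p * Real.exp (-u)) := by
  have h2 := one_sub_exp_pos hu
  rw [zt, g, ← ENNReal.ofReal_pow h2.le, ← ENNReal.ofReal_mul (by positivity), g_eq hu]
  congr 1
  field_simp
  ring

theorem lintegral_zt (p : ℕ) {t : ℝ} (ht : 0 < t) :
    ∫⁻ u in Ioo 0 t, zt u ^ (p + 1) * g u = zt t ^ (p + 1) * ((p + 1 : ℕ) : ℝ≥0∞)⁻¹ := by
  rw [setLIntegral_congr_fun measurableSet_Ioo (fun u hu => zt_pow_g hu.1 p),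
    Measure.restrict_congr_set Ioo_ae_eq_Ioc, ← ofReal_integral_eq_lintegral_ofReal]
  · rw [← intervalIntegral.integral_of_le ht.le]
    have hd : ∀ x ∈ Set.uIcc 0 t, HasDerivAt (fun u => (1 - Real.exp (-u)) ^ (p + 1) / ((p + 1 : ℕ) : ℝ))
        ((1 - Real.exp (-x)) ^ p * Real.exp (-x)) x := by
      intro x _
      have h1 : HasDerivAt (fun u : ℝ => 1 - Real.exp (-u)) (Real.exp (-x)) x := by
        have := ((Real.hasDerivAt_exp (-x)).comp x (hasDerivAt_neg x)).const_sub 1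
        simpa [Function.comp_def] using this
      have h2 := (h1.pow (p + 1)).div_const ((p + 1 : ℕ) : ℝ)
      refine HasDerivAt.congr_deriv h2 ?_
      push_cast
      field_simp
    rw [intervalIntegral.integral_eq_sub_of_hasDerivAt hd
      ((by fun_prop : Continuous _).intervalIntegrable _ _)]
    have h2 := one_sub_exp_pos ht
    simp only [neg_zero, Real.exp_zero, sub_self]
    rw [zero_pow (by simp), zero_div, sub_zero, div_eq_mul_inv, ENNReal.ofReal_mul (by positivity),
      ENNReal.ofReal_pow h2.le, ENNReal.ofReal_inv_of_pos (by positivity), ENNReal.ofReal_natCast, zt]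
  · exact ((by fun_prop : Continuous _).integrableOn_Icc).mono_set Ioc_subset_Icc_self
  · refine (ae_restrict_iff' measurableSet_Ioc).mpr (ae_of_all _ fun u hu => ?_)
    have h2 := one_sub_exp_pos hu.1
    simp only [Pi.zero_apply]
    positivity

theorem F_succ (a : ℕ) (ks : List ℕ) {t : ℝ} (ht : 0 < t) :
    F ((a + 1) :: ks) t = ∫⁻ u in Ioo 0 t, F (a :: ks) u * g u := by
  simp only [F, L, ← ENNReal.tsum_mul_right]
  rw [lintegral_tsum]
  · refine tsum_congr fun p => ?_
    rcases p with _ | p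
    · simp
    · simp only [Nat.succ_pos, if_true]
      have : ∀ u, zt u ^ (p + 1) * ((p + 1 : ℕ) : ℝ≥0∞)⁻¹ ^ a * S ks (p + 1) * g u =
        (((p + 1 : ℕ) : ℝ≥0∞)⁻¹ ^ a * S ks (p + 1)) * (zt u ^ (p + 1) * g u) := fun u => by ring
      simp only [this]
      rw [lintegral_const_mul _ (by fun_prop), lintegral_zt p ht]
      ring
  · intro p
    split_ifs <;> fun_prop

theorem tsum_gt_geom (x : ℝ≥0∞) (n : ℕ) :
    ∑' p : ℕ, (if n < p then x ^ p else 0) = x ^ (n + 1) * (1 - x)⁻¹ := by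
  rw [← ENNReal.tsum_geometric, ← ENNReal.tsum_mul_left]
  have hinj : Function.Injective (fun q : ℕ => n + 1 + q) := fun a b h => by simpa using h
  rw [← hinj.tsum_eq]
  · refine tsum_congr fun q => ?_
    rw [if_pos (by omega), pow_add]
  · intro p hp
    have : n < p := by
      by_contra h
      simp [h] at hp
    exact ⟨p - (n + 1), by simp; omega⟩

theorem zt_g {u : ℝ} (hu : 0 < u) : (1 - zt u)⁻¹ * (zt u * g u) = 1 := by
  have h2 := one_sub_exp_pos hu
  have := zt_pow_g hu 0
  simp only [zero_add, pow_one, pow_zero, one_mul] at this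
  rw [this, zt, ← ENNReal.ofReal_one, ← ENNReal.ofReal_sub _ h2.le]
  simp only [sub_sub_cancel]
  rw [ENNReal.inv_mul_cancel (by simpa using Real.exp_pos _) ENNReal.ofReal_ne_top,
    ENNReal.ofReal_one]

theorem F_zero (ks : List ℕ) {u : ℝ} (hu : 0 < u) : F (0 :: ks) u * g u = F ks u := by
  rcases ks with _ | ⟨k, ks⟩
  · simp only [F, L, S, pow_zero, mul_one]
    rw [tsum_gt_geom, zero_add, pow_one]
    refine Eq.trans ?_ (zt_g hu)
    ring
  · simp only [F, L, S, pow_zero, mul_one, ← ENNReal.tsum_mul_right]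
    have h1 : ∀ p : ℕ, (if 0 < p then zt u ^ p * ∑' q : ℕ,
        (if 0 < q ∧ q < p then ((q : ℝ≥0∞)⁻¹) ^ k * S ks q else 0) else 0) * g u =
        ∑' q : ℕ, (if 0 < q then ((q : ℝ≥0∞)⁻¹) ^ k * S ks q * g u * (if q < p then zt u ^ p else 0)
          else 0) := by
      intro p
      by_cases hp : 0 < p
      · rw [if_pos hp, ← ENNReal.tsum_mul_left, ← ENNReal.tsum_mul_right]
        refine tsum_congr fun q => ?_
        by_cases h1 : 0 < q <;> by_cases h2 : q < p <;> simp [h1, h2]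
        ring
      · rw [if_neg hp]
        have : ∀ q, ¬ q < p := fun q => by omega
        simp [this]
    simp only [h1]
    rw [ENNReal.tsum_comm]
    refine tsum_congr fun q => ?_
    by_cases h1 : 0 < q
    · simp only [if_pos h1]
      rw [ENNReal.tsum_mul_left, tsum_gt_geom]
      calc _ = (zt u ^ q * ((q : ℝ≥0∞)⁻¹) ^ k * S ks q) * ((1 - zt u)⁻¹ * (zt u * g u)) := by ring
        _ = _ := by rw [zt_g hu, mul_one]
    · simp [h1]

theorem φ_g (m n : ℕ) {u : ℝ} (hu : 0 < u) :
    φ m n u * g u = ∑' p : ℕ, if n < p then φ m p u else 0 := by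
  have e : ∀ p : ℕ, φ m p u = ENNReal.ofReal (u ^ m / (m.factorial : ℝ)) *
      ENNReal.ofReal (Real.exp (-u)) ^ p := by
    intro p
    rw [φ, ENNReal.ofReal_mul (by positivity), ← ENNReal.ofReal_pow (Real.exp_pos _).le,
      ← Real.exp_nat_mul]
    congr 3
    ring
  have e2 : ∀ p : ℕ, (if n < p then φ m p u else 0) = ENNReal.ofReal (u ^ m / (m.factorial : ℝ)) *
      (if n < p then ENNReal.ofReal (Real.exp (-u)) ^ p else 0) := by
    intro p
    rw [e, mul_ite, mul_zero]
  simp only [e2]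
  rw [ENNReal.tsum_mul_left, tsum_gt_geom, e, mul_assoc, pow_succ, mul_assoc]
  congr 2
  have h2 := one_sub_exp_pos hu
  rw [g, g_eq hu, ← ENNReal.ofReal_one, ← ENNReal.ofReal_sub _ (Real.exp_pos _).le,
    ← ENNReal.ofReal_inv_of_pos h2, ← ENNReal.ofReal_mul (Real.exp_pos _).le, div_eq_mul_inv]

theorem tonelli (f h : ℝ → ℝ≥0∞) (hf : Measurable f) (hh : Measurable h) :
    ∫⁻ t in Ioi (0 : ℝ), f t * ∫⁻ u in Ioo 0 t, h u =
      ∫⁻ u in Ioi (0 : ℝ), h u * ∫⁻ t in Ioi u, f t := by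
  have h1 : ∀ t, f t * ∫⁻ u in Ioo 0 t, h u =
      ∫⁻ u in Ioi (0 : ℝ), (if u < t then f t * h u else 0) := by
    intro t
    rw [← lintegral_const_mul _ hh, ← lintegral_indicator measurableSet_Ioo,
      ← lintegral_indicator measurableSet_Ioi]
    refine lintegral_congr fun u => ?_
    simp only [indicator, mem_Ioo, mem_Ioi]
    by_cases h1 : 0 < u <;> by_cases h2 : u < t <;> simp [h1, h2]
  have h2 : ∀ u ∈ Ioi (0 : ℝ), h u * ∫⁻ t in Ioi u, f t =
      ∫⁻ t in Ioi (0 : ℝ), (if u < t then f t * h u else 0) := by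
    intro u hu
    rw [← lintegral_const_mul _ hf, ← lintegral_indicator measurableSet_Ioi,
      ← lintegral_indicator measurableSet_Ioi]
    refine lintegral_congr fun t => ?_
    simp only [indicator, mem_Ioi] at hu ⊢
    by_cases h2 : u < t
    · simp [h2, hu.trans h2, mul_comm]
    · simp [h2]
  simp only [h1]
  rw [setLIntegral_congr_fun measurableSet_Ioi h2, lintegral_lintegral_swap]
  refine Measurable.aemeasurable ?_
  refine Measurable.ite (measurableSet_lt measurable_snd measurable_fst) ?_ measurable_const
  fun_prop

theorem hasDerivAt_Q (m n : ℕ) (hn : 0 < n) (t : ℝ) :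
    HasDerivAt (fun t : ℝ => -∑ p ∈ Finset.HasAntidiagonal.antidiagonal m,
      (t ^ p.1 / (p.1.factorial : ℝ) * Real.exp (-(n * t))) * ((n : ℝ)⁻¹) ^ (p.2 + 1))
      (t ^ m / (m.factorial : ℝ) * Real.exp (-(n * t))) t := by
  have hn' : (n : ℝ) ≠ 0 := by positivity
  have he : HasDerivAt (fun t : ℝ => Real.exp (-(n * t))) (-(n : ℝ) * Real.exp (-(n * t))) t := by
    have := (((hasDerivAt_id t).const_mul (n : ℝ)).neg).exp
    simpa [mul_comm] using this
  induction m with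
  | zero =>
    simp only [Finset.Nat.antidiagonal_zero, Finset.sum_singleton]
    simp only [pow_zero, Nat.factorial_zero, Nat.cast_one, div_one, one_mul, zero_add, pow_one]
    refine (he.mul_const ((n : ℝ)⁻¹)).neg.congr_deriv ?_
    field_simp
  | succ m ih =>
    have e : (fun t : ℝ => -∑ p ∈ Finset.HasAntidiagonal.antidiagonal (m + 1),
      (t ^ p.1 / (p.1.factorial : ℝ) * Real.exp (-(n * t))) * ((n : ℝ)⁻¹) ^ (p.2 + 1)) =
      fun t : ℝ => -(t ^ (m + 1) / ((m + 1).factorial : ℝ) * Real.exp (-(n * t)) * (n : ℝ)⁻¹) +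
        (-∑ p ∈ Finset.HasAntidiagonal.antidiagonal m,
      (t ^ p.1 / (p.1.factorial : ℝ) * Real.exp (-(n * t))) * ((n : ℝ)⁻¹) ^ (p.2 + 1)) * (n : ℝ)⁻¹ := by
      funext t
      rw [Finset.Nat.sum_antidiagonal_succ', neg_add, neg_mul, Finset.sum_mul, zero_add, pow_one]
      simp only [pow_succ, mul_assoc]
    rw [e]
    refine (((((hasDerivAt_pow (m + 1) t).div_const _).mul he).mul_const ((n : ℝ)⁻¹)).neg.add
      (ih.mul_const ((n : ℝ)⁻¹))).congr_deriv ?_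
    rw [Nat.factorial_succ]
    push_cast
    have : (m.factorial : ℝ) ≠ 0 := by positivity
    have : (m : ℝ) + 1 ≠ 0 := by positivity
    field_simp
    ring_nf

theorem tendsto_Q (i n : ℕ) (hn : 0 < n) :
    Tendsto (fun t : ℝ => t ^ i / (i.factorial : ℝ) * Real.exp (-(n * t))) atTop (𝓝 0) := by
  have h := Real.tendsto_pow_mul_exp_neg_atTop_nhds_zero i
  have h1 : Tendsto (fun t : ℝ => t ^ i / (i.factorial : ℝ) * Real.exp (-t)) atTop (𝓝 0) := by
    have := h.mul_const ((i.factorial : ℝ)⁻¹)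
    rw [zero_mul] at this
    refine this.congr fun t => by ring
  refine squeeze_zero' ?_ ?_ h1
  · filter_upwards [eventually_ge_atTop 0] with t ht
    positivity
  · filter_upwards [eventually_ge_atTop 0] with t ht
    have : (1 : ℝ) ≤ n := by exact_mod_cast hn
    gcongr
    nlinarith

theorem lintegral_φ (m n : ℕ) (hn : 0 < n) {u : ℝ} (hu : 0 < u) :
    ∫⁻ t in Ioi u, φ m n t = ∑ p ∈ Finset.HasAntidiagonal.antidiagonal m,
      φ p.1 n u * ((n : ℝ≥0∞)⁻¹) ^ (p.2 + 1) := by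
  have hlim : Tendsto (fun t : ℝ => -∑ p ∈ Finset.HasAntidiagonal.antidiagonal m,
      (t ^ p.1 / (p.1.factorial : ℝ) * Real.exp (-(n * t))) * ((n : ℝ)⁻¹) ^ (p.2 + 1))
      atTop (𝓝 0) := by
    have : Tendsto (fun t : ℝ => ∑ p ∈ Finset.HasAntidiagonal.antidiagonal m,
      (t ^ p.1 / (p.1.factorial : ℝ) * Real.exp (-(n * t))) * ((n : ℝ)⁻¹) ^ (p.2 + 1))
      atTop (𝓝 (∑ p ∈ Finset.HasAntidiagonal.antidiagonal m, 0 * ((n : ℝ)⁻¹) ^ (p.2 + 1))) :=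
      tendsto_finsetSum _ fun p _ => (tendsto_Q p.1 n hn).mul_const _
    simpa using this.neg
  have hpos : ∀ x ∈ Ioi u, 0 ≤ x ^ m / (m.factorial : ℝ) * Real.exp (-(n * x)) := by
    intro x hx
    have : 0 < x := hu.trans hx
    positivity
  have hint := integrableOn_Ioi_deriv_of_nonneg' (fun x _ => hasDerivAt_Q m n hn x) hpos hlim
  have hval := integral_Ioi_of_hasDerivAt_of_nonneg' (fun x _ => hasDerivAt_Q m n hn x) hpos hlim
  simp only [φ]
  rw [← ofReal_integral_eq_lintegral_ofReal hint
    ((ae_restrict_iff' measurableSet_Ioi).mpr (ae_of_all _ hpos)), hval, zero_sub, neg_neg,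
    ENNReal.ofReal_sum_of_nonneg (fun p _ => by positivity)]
  refine Finset.sum_congr rfl fun p _ => ?_
  rw [ENNReal.ofReal_mul (by positivity), ENNReal.ofReal_pow (by positivity),
    ENNReal.ofReal_inv_of_pos (by positivity), ENNReal.ofReal_natCast]

noncomputable def I (m n : ℕ) (k : List ℕ) : ℝ≥0∞ := ∫⁻ t in Ioi (0 : ℝ), φ m n t * F k t

theorem I_succ (m n : ℕ) (hn : 0 < n) (a : ℕ) (ks : List ℕ) :
    I m n ((a + 1) :: ks) = ∑ p ∈ Finset.HasAntidiagonal.antidiagonal m,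
      ((n : ℝ≥0∞)⁻¹) ^ (p.2 + 1) * ∫⁻ u in Ioi (0 : ℝ), φ p.1 n u * (F (a :: ks) u * g u) := by
  unfold I
  have h1 : ∀ t ∈ Ioi (0 : ℝ), φ m n t * F ((a + 1) :: ks) t =
      φ m n t * ∫⁻ u in Ioo 0 t, F (a :: ks) u * g u := fun t ht => by rw [F_succ a ks ht]
  rw [setLIntegral_congr_fun measurableSet_Ioi h1, tonelli _ _ (by fun_prop) (by fun_prop)]
  have h2 : ∀ u ∈ Ioi (0 : ℝ), F (a :: ks) u * g u * ∫⁻ t in Ioi u, φ m n t =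
      ∑ p ∈ Finset.HasAntidiagonal.antidiagonal m,
        ((n : ℝ≥0∞)⁻¹) ^ (p.2 + 1) * (φ p.1 n u * (F (a :: ks) u * g u)) := by
    intro u hu
    rw [lintegral_φ m n hn hu, Finset.mul_sum]
    refine Finset.sum_congr rfl fun p _ => by ring
  rw [setLIntegral_congr_fun measurableSet_Ioi h2, lintegral_finsetSum _ (fun p _ => by fun_prop)]
  refine Finset.sum_congr rfl fun p _ => ?_
  rw [lintegral_const_mul _ (by fun_prop)]

theorem I_one (m n : ℕ) (hn : 0 < n) (ks : List ℕ) :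
    I m n (1 :: ks) = ∑ p ∈ Finset.HasAntidiagonal.antidiagonal m,
      ((n : ℝ≥0∞)⁻¹) ^ (p.2 + 1) * I p.1 n ks := by
  rw [I_succ m n hn 0 ks]
  refine Finset.sum_congr rfl fun p _ => ?_
  congr 1
  exact setLIntegral_congr_fun measurableSet_Ioi fun u hu => by rw [F_zero ks hu]

theorem lintegral_φ_g (m n : ℕ) (k : List ℕ) :
    ∫⁻ u in Ioi (0 : ℝ), φ m n u * (F k u * g u) = ∑' q : ℕ, if n < q then I m q k else 0 := by
  have h : ∀ u ∈ Ioi (0 : ℝ), φ m n u * (F k u * g u) =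
      ∑' q : ℕ, if n < q then φ m q u * F k u else 0 := by
    intro u hu
    rw [mul_comm (F k u), ← mul_assoc, φ_g m n hu, ← ENNReal.tsum_mul_right]
    simp only [ite_mul, zero_mul]
  rw [setLIntegral_congr_fun measurableSet_Ioi h, lintegral_tsum]
  · refine tsum_congr fun q => ?_
    split_ifs
    · rfl
    · simp
  · intro q
    split_ifs <;> fun_prop

theorem I_two (m n : ℕ) (hn : 0 < n) (a : ℕ) (ks : List ℕ) :
    I m n ((a + 2) :: ks) = ∑ p ∈ Finset.HasAntidiagonal.antidiagonal m,
      ((n : ℝ≥0∞)⁻¹) ^ (p.2 + 1) * ∑' q : ℕ, if n < q then I p.1 q ((a + 1) :: ks) else 0 := by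
  rw [I_succ m n hn (a + 1) ks]
  simp only [lintegral_φ_g]

theorem I_nil (m n : ℕ) (hn : 0 < n) : I m n [] = ((n : ℝ≥0∞)⁻¹) ^ (m + 1) := by
  have hlim : Tendsto (fun t : ℝ => -∑ p ∈ Finset.HasAntidiagonal.antidiagonal m,
      (t ^ p.1 / (p.1.factorial : ℝ) * Real.exp (-(n * t))) * ((n : ℝ)⁻¹) ^ (p.2 + 1))
      atTop (𝓝 0) := by
    have : Tendsto (fun t : ℝ => ∑ p ∈ Finset.HasAntidiagonal.antidiagonal m,
      (t ^ p.1 / (p.1.factorial : ℝ) * Real.exp (-(n * t))) * ((n : ℝ)⁻¹) ^ (p.2 + 1))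
      atTop (𝓝 (∑ p ∈ Finset.HasAntidiagonal.antidiagonal m, 0 * ((n : ℝ)⁻¹) ^ (p.2 + 1))) :=
      tendsto_finsetSum _ fun p _ => (tendsto_Q p.1 n hn).mul_const _
    simpa using this.neg
  have hpos : ∀ x ∈ Ioi (0 : ℝ), 0 ≤ x ^ m / (m.factorial : ℝ) * Real.exp (-(n * x)) := by
    intro x hx
    have : 0 < x := hx
    positivity
  have hint := integrableOn_Ioi_deriv_of_nonneg' (fun x _ => hasDerivAt_Q m n hn x) hpos hlim
  have hval := integral_Ioi_of_hasDerivAt_of_nonneg' (fun x _ => hasDerivAt_Q m n hn x) hpos hlim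
  simp only [φ, I, F, L, mul_one]
  rw [← ofReal_integral_eq_lintegral_ofReal hint
    ((ae_restrict_iff' measurableSet_Ioi).mpr (ae_of_all _ hpos)), hval, zero_sub, neg_neg,
    Finset.sum_eq_single (0, m)]
  · rw [← ENNReal.ofReal_natCast, ← ENNReal.ofReal_inv_of_pos (by positivity),
      ← ENNReal.ofReal_pow (by positivity)]
    simp
  · rintro ⟨a, b⟩ h1 h2
    have : a ≠ 0 := by
      rintro rfl
      simp at h1
      exact h2 (by simp [h1])
    simp [this]
  · simp

end AK

namespace AK

open scoped ENNReal
open Set Filter Topology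

/-- Inner sum with smallest variable fixed. -/
noncomputable def ZL (m n c : ℕ) (cs : List ℕ) : ℝ≥0∞ :=
  ∑ p ∈ Finset.HasAntidiagonal.antidiagonal m,
      ((c + p.1 - 1).choose p.1 : ℝ≥0∞) * ((n : ℝ≥0∞)⁻¹) ^ (c + p.1) * P p.2 n cs

theorem P_cons (m N c : ℕ) (cs : List ℕ) :
    P m N (c :: cs) = ∑' n : ℕ, if N < n then ZL m n c cs else 0 := rfl

theorem ZL_one (m n : ℕ) (cs : List ℕ) :
    ZL m n 1 cs = ∑ p ∈ Finset.HasAntidiagonal.antidiagonal m,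
      ((n : ℝ≥0∞)⁻¹) ^ (p.2 + 1) * P p.1 n cs := by
  rw [ZL, ← Finset.Nat.sum_antidiagonal_swap]
  refine Finset.sum_congr rfl fun p _ => ?_
  simp [add_comm]

theorem sum_choose_hockey (c J : ℕ) :
    ∑ q ∈ Finset.HasAntidiagonal.antidiagonal J, (c + q.1 - 1).choose q.1 = (c + J).choose J := by
  induction J with
  | zero => simp
  | succ J ih =>
    rw [Finset.Nat.sum_antidiagonal_succ', ih]
    have : c + (J + 1) - 1 = c + J := by omega
    rw [this, ← add_assoc, Nat.choose_succ_succ, add_comm]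

theorem ZL_succ (m n c : ℕ) (cs : List ℕ) :
    ZL m n (c + 1) cs = ∑ p ∈ Finset.HasAntidiagonal.antidiagonal m,
      ((n : ℝ≥0∞)⁻¹) ^ (p.2 + 1) * ZL p.1 n c cs := by
  set x : ℝ≥0∞ := (n : ℝ≥0∞)⁻¹ with hx
  let A : ℕ → PowerSeries ℝ≥0∞ := fun c =>
    PowerSeries.mk fun j => ((c + j - 1).choose j : ℝ≥0∞) * x ^ (c + j)
  let G : PowerSeries ℝ≥0∞ := PowerSeries.mk fun j => x ^ (j + 1)
  let Q : PowerSeries ℝ≥0∞ := PowerSeries.mk fun i => P i n cs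
  have hZ : ∀ m c, ZL m n c cs = PowerSeries.coeff m (A c * Q) := by
    intro m c
    rw [PowerSeries.coeff_mul, ZL]
    simp [A, Q, hx]
  have hA : A (c + 1) = A c * G := by
    ext J
    rw [PowerSeries.coeff_mul]
    simp only [A, G, PowerSeries.coeff_mk]
    have e : c + 1 + J - 1 = c + J := by omega
    rw [e, ← sum_choose_hockey, Nat.cast_sum, Finset.sum_mul]
    refine Finset.sum_congr rfl fun q hq => ?_
    rw [Finset.HasAntidiagonal.mem_antidiagonal] at hq
    rw [← hq, mul_assoc, ← pow_add]
    congr 2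
    omega
  simp only [hZ]
  rw [hA, mul_assoc, mul_comm G, ← mul_assoc, PowerSeries.coeff_mul]
  refine Finset.sum_congr rfl fun q hq => ?_
  simp only [G, PowerSeries.coeff_mk]
  rw [mul_comm]

theorem I_eq (k : List ℕ) (hk : ∀ a ∈ k, 0 < a) (m n : ℕ) (hn : 0 < n) :
    ∀ c cs, fromWord (V k) = c :: cs → I m n k = ZL m n c cs := by
  induction k generalizing m n with
  | nil =>
    intro c cs h
    simp [V, fromWord] at h
    obtain ⟨rfl, rfl⟩ := h
    rw [I_nil m n hn, ZL_one, Finset.sum_eq_single (0, m)]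
    · simp [P]
    · rintro ⟨a, b⟩ h1 h2
      have : a ≠ 0 := by
        rintro rfl
        simp at h1
        exact h2 (by simp [h1])
      simp [P, this]
    · simp
  | cons a ks ih =>
    have ih' := ih (fun x hx => hk x (by simp [hx]))
    have ha := hk a (by simp)
    obtain ⟨a, rfl⟩ : ∃ b, a = b + 1 := ⟨a - 1, by omega⟩
    clear ih hk ha
    induction a generalizing m n with
    | zero =>
      intro c cs h
      simp only [V, zero_add, Nat.sub_self, List.replicate_zero, List.nil_append,
        fromWord_false] at h
      rcases hw : fromWord (V ks) with _ | ⟨c', cs'⟩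
      · exact absurd hw (fromWord_ne_nil _)
      rw [hw] at h
      simp only [plusOne, List.cons.injEq] at h
      obtain ⟨rfl, rfl⟩ := h
      rw [zero_add, I_one m n hn, ZL_succ]
      refine Finset.sum_congr rfl fun p _ => ?_
      rw [ih' p.1 n hn _ _ hw]
    | succ a iha =>
      intro c cs h
      have hV : V ((a + 1 + 1) :: ks) = true :: V ((a + 1) :: ks) := by
        simp [V, List.replicate_succ]
      rw [hV, fromWord_true] at h
      simp only [List.cons.injEq] at h
      obtain ⟨rfl, rfl⟩ := h
      rw [I_two m n hn, ZL_one]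
      refine Finset.sum_congr rfl fun p _ => ?_
      congr 1
      rcases hw : fromWord (V ((a + 1) :: ks)) with _ | ⟨c', cs'⟩
      · exact absurd hw (fromWord_ne_nil _)
      rw [P_cons]
      refine tsum_congr fun q => ?_
      by_cases hq : n < q
      · rw [if_pos hq, if_pos hq, iha p.1 q (by omega) _ _ hw]
      · rw [if_neg hq, if_neg hq]

theorem tsum_I (k : List ℕ) (hk : ∀ a ∈ k, 0 < a) (m : ℕ) :
    ∑' q : ℕ, (if 0 < q then I m q k else 0) = P m 0 (fromWord (V k)) := by
  rcases hw : fromWord (V k) with _ | ⟨c, cs⟩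
  · exact absurd hw (fromWord_ne_nil _)
  rw [P_cons]
  refine tsum_congr fun q => ?_
  by_cases hq : 0 < q
  · rw [if_pos hq, if_pos hq, I_eq k hk m q hq _ _ hw]
  · rw [if_neg hq, if_neg hq]

theorem P_eq_rev (cs : List ℕ) (d : ℕ) (h : cs.length = d) (m N : ℕ) :
    P m N cs = ∑ j ∈ Finset.Nat.antidiagonalTuple d m,
      ((∏ i : Fin d, (cs.reverse.getD (i : ℕ) 0 + j i - 1).choose (j i) : ℕ) : ℝ≥0∞) *
        Ch (fun a b => b < a) d (fun x => N < x)
          (fun i n => ((n : ℝ≥0∞)⁻¹) ^ (cs.reverse.getD (i : ℕ) 0 + j i)) := by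
  subst h
  have hg : ∀ i : Fin cs.length, cs.reverse.getD (i.rev : ℕ) 0 = cs.get i := by
    intro i
    have h1 : (i.rev : ℕ) < cs.reverse.length := by
      rw [List.length_reverse]
      exact i.rev.2
    rw [List.getD_eq_getElem _ _ h1, List.getElem_reverse, List.get_eq_getElem]
    congr 1
    rw [Fin.val_rev]
    omega
  rw [P_eq]
  refine Finset.sum_bij' (fun j _ => j ∘ Fin.rev) (fun j _ => j ∘ Fin.rev) ?_ ?_ ?_ ?_ ?_
  · intro j hj
    rw [Finset.Nat.mem_antidiagonalTuple] at hj ⊢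
    rw [← hj, ← Equiv.sum_comp Fin.revPerm]
    simp
  · intro j hj
    rw [Finset.Nat.mem_antidiagonalTuple] at hj ⊢
    rw [← hj, ← Equiv.sum_comp Fin.revPerm]
    simp
  · intro j _
    funext i
    simp
  · intro j _
    funext i
    simp
  · intro j _
    congr 1
    · congr 1
      symm
      rw [← Equiv.prod_comp Fin.revPerm]
      refine Finset.prod_congr rfl fun i _ => ?_
      simp only [Fin.revPerm_apply, hg, Function.comp, Fin.rev_rev]
    · symm
      rw [Ch_rev]
      refine Ch_congr (fun x => Iff.rfl) (fun i x => ?_)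
      simp only [hg, Function.comp, Fin.rev_rev]

/-! ### Convergence -/

theorem sum_inv_sqrt (N : ℕ) : ∑ p ∈ Finset.range (N + 1), (√(p : ℝ))⁻¹ ≤ 2 * √(N : ℝ) := by
  induction N with
  | zero => simp
  | succ N ih =>
    rw [Finset.sum_range_succ]
    have h1 : 0 < √((N + 1 : ℕ) : ℝ) := Real.sqrt_pos.mpr (by positivity)
    have h0 : 0 ≤ √(N : ℝ) := Real.sqrt_nonneg _
    have e1 : √((N + 1 : ℕ) : ℝ) ^ 2 = N + 1 := by
      rw [Real.sq_sqrt (by positivity)]; push_cast; ring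
    have e0 : √(N : ℝ) ^ 2 = N := Real.sq_sqrt (by positivity)
    set a := √((N + 1 : ℕ) : ℝ)
    set b := √(N : ℝ)
    have hab : a⁻¹ * a = 1 := inv_mul_cancel₀ h1.ne'
    have : a⁻¹ ≤ 2 * a - 2 * b := by
      rw [inv_le_iff_one_le_mul₀ h1]
      nlinarith [sq_nonneg (a - b)]
    linarith

theorem inv_natCast_eq {p : ℕ} (hp : 0 < p) : ((p : ℝ≥0∞)⁻¹) = ENNReal.ofReal ((p : ℝ)⁻¹) := by
  rw [ENNReal.ofReal_inv_of_pos (by positivity), ENNReal.ofReal_natCast]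

theorem inv_natCast_le_one {p : ℕ} (hp : 0 < p) : ((p : ℝ≥0∞)⁻¹) ≤ 1 := by
  rw [ENNReal.inv_le_one]
  exact_mod_cast hp

theorem S_le (ks : List ℕ) (hk : ∀ a ∈ ks, 0 < a) (N : ℕ) (hN : 0 < N) :
    S ks N ≤ ENNReal.ofReal (2 ^ ks.length * √(N : ℝ)) := by
  induction ks generalizing N with
  | nil =>
    simp only [S, List.length_nil, pow_zero, one_mul]
    rw [← ENNReal.ofReal_one]
    refine ENNReal.ofReal_le_ofReal ?_
    rw [Real.one_le_sqrt]
    exact_mod_cast hN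
  | cons a ks ih =>
    have ih' := ih (fun x hx => hk x (by simp [hx]))
    have ha := hk a (by simp)
    rw [S]
    have hterm : ∀ p : ℕ, (if 0 < p ∧ p < N then ((p : ℝ≥0∞)⁻¹) ^ a * S ks p else 0) ≤
        if p ∈ Finset.range N then ENNReal.ofReal (2 ^ ks.length * (√(p : ℝ))⁻¹) else 0 := by
      intro p
      by_cases hp : 0 < p ∧ p < N
      · rw [if_pos hp, if_pos (Finset.mem_range.mpr hp.2)]
        have hp0 : (0 : ℝ) < p := by exact_mod_cast hp.1
        calc ((p : ℝ≥0∞)⁻¹) ^ a * S ks p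
            ≤ ((p : ℝ≥0∞)⁻¹) ^ 1 * ENNReal.ofReal (2 ^ ks.length * √(p : ℝ)) := by
              refine mul_le_mul' ?_ (ih' p hp.1)
              exact pow_le_pow_right_of_le_one' (inv_natCast_le_one hp.1) ha
          _ = _ := by
              rw [pow_one, inv_natCast_eq hp.1, ← ENNReal.ofReal_mul (by positivity)]
              congr 1
              have e : √(p : ℝ) ^ 2 = p := Real.sq_sqrt hp0.le
              have h1 : 0 < √(p : ℝ) := Real.sqrt_pos.mpr hp0
              field_simp
              exact e
      · rw [if_neg hp]
        exact zero_le
    refine (ENNReal.tsum_le_tsum hterm).trans ?_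
    rw [tsum_eq_sum (s := Finset.range N) (fun p hp => if_neg hp), Finset.sum_congr rfl
      (fun p hp => if_pos hp), ← ENNReal.ofReal_sum_of_nonneg (fun p _ => by positivity),
      ← Finset.mul_sum]
    refine ENNReal.ofReal_le_ofReal ?_
    rw [List.length_cons, pow_succ, mul_assoc]
    refine mul_le_mul_of_nonneg_left ?_ (by positivity)
    refine le_trans ?_ (sum_inv_sqrt N)
    exact Finset.sum_le_sum_of_subset_of_nonneg (Finset.range_mono (by omega))
      (fun _ _ _ => by positivity)

theorem F_ne_top (k : List ℕ) (hk : ∀ a ∈ k, 0 < a) (t : ℝ) (ht : 0 < t) : F k t ≠ ∞ := by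
  rcases k with _ | ⟨a, ks⟩
  · simp [F, L]
  · have h2 := one_sub_exp_pos ht
    simp only [F, L, zt]
    set x := 1 - Real.exp (-t) with hx
    have hx1 : x < 1 := by rw [hx]; linarith [Real.exp_pos (-t)]
    have hs : Summable (fun p : ℕ => 2 ^ ks.length * ((p : ℝ) ^ 1 * x ^ p)) :=
      (summable_pow_mul_geometric_of_norm_lt_one (R := ℝ) (r := x) 1
        (by rw [Real.norm_of_nonneg h2.le]; exact hx1)).mul_left (2 ^ ks.length)
    refine ne_top_of_le_ne_top hs.tsum_ofReal_ne_top (ENNReal.tsum_le_tsum fun p => ?_)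
    clear hs
    clear_value x
    split_ifs with hp
    · calc ENNReal.ofReal x ^ p * ((p : ℝ≥0∞)⁻¹) ^ a * S ks p
          ≤ ENNReal.ofReal x ^ p * 1 * ENNReal.ofReal (2 ^ ks.length * √(p : ℝ)) := by
            gcongr
            · exact pow_le_one' (inv_natCast_le_one hp) _
            · exact S_le ks (fun x hx => hk x (by simp [hx])) p hp
        _ ≤ _ := by
            rw [mul_one, ← ENNReal.ofReal_pow h2.le, ← ENNReal.ofReal_mul (by positivity)]
            refine ENNReal.ofReal_le_ofReal ?_
            have : √(p : ℝ) ≤ p := by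
              rw [Real.sqrt_le_left (by positivity)]
              have : (1 : ℝ) ≤ p := by exact_mod_cast hp
              nlinarith
            have h3 : 0 ≤ x ^ p * 2 ^ ks.length := by positivity
            nlinarith [mul_le_mul_of_nonneg_left this h3]
    · exact zero_le

theorem Ch_ne_top (l : List ℕ) (d : ℕ) (h : l.length = d) (hne : l ≠ []) (h2 : 2 ≤ l.getD 0 0)
    (hl : ∀ a ∈ l, 0 < a) : Ch (fun a b => b < a) d (fun x => 0 < x)
      (fun i n => ((n : ℝ≥0∞)⁻¹) ^ l.getD (i : ℕ) 0) ≠ ∞ := by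
  subst h
  rcases l with _ | ⟨a, ks⟩
  · exact absurd rfl hne
  have ha : 2 ≤ a := by simpa using h2
  have e : Ch (fun a b => b < a) (a :: ks).length (fun x => 0 < x)
      (fun i n => ((n : ℝ≥0∞)⁻¹) ^ (a :: ks).getD (i : ℕ) 0) =
      ∑' p : ℕ, if 0 < p then ((p : ℝ≥0∞)⁻¹) ^ a * S ks p else 0 := by
    refine (Ch_succ _ _ _ _).trans (tsum_congr fun p => ?_)
    by_cases hp : 0 < p
    · rw [if_pos hp, if_pos hp, ← Ch_S]
      congr 1
      refine Ch_congr (fun x => Iff.rfl) (fun i x => ?_)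
      simp
    · rw [if_neg hp, if_neg hp]
  rw [e]
  have hs : Summable (fun p : ℕ => 2 ^ ks.length * ((p : ℝ) ^ (-(3 / 2) : ℝ))) :=
    (Real.summable_nat_rpow.mpr (by norm_num)).mul_left _
  refine ne_top_of_le_ne_top hs.tsum_ofReal_ne_top (ENNReal.tsum_le_tsum fun p => ?_)
  split_ifs with hp
  · have hp0 : (0 : ℝ) < p := by exact_mod_cast hp
    calc ((p : ℝ≥0∞)⁻¹) ^ a * S ks p
        ≤ ((p : ℝ≥0∞)⁻¹) ^ 2 * ENNReal.ofReal (2 ^ ks.length * √(p : ℝ)) := by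
          refine mul_le_mul' ?_ (S_le ks (fun x hx => hl x (by simp [hx])) p hp)
          exact pow_le_pow_right_of_le_one' (inv_natCast_le_one hp) ha
      _ = _ := by
          rw [inv_natCast_eq hp, ← ENNReal.ofReal_pow (by positivity),
            ← ENNReal.ofReal_mul (by positivity)]
          congr 1
          rw [Real.sqrt_eq_rpow, ← Real.rpow_neg_one, ← Real.rpow_natCast, ← Real.rpow_mul hp0.le,
            mul_left_comm, ← Real.rpow_add hp0]
          norm_num
  · exact zero_le

/-! ### Assembly -/

theorem xi_eq (k : List ℕ) (hk : ∀ a ∈ k, 0 < a) (m : ℕ) :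
    xiAK (m + 1) k = (((P m 0 (fromWord (V k))).toReal : ℝ) : ℂ) := by
  unfold xiAK
  have h1 : ∀ t ∈ Ioi (0 : ℝ), (t : ℂ) ^ ((m + 1 : ℂ) - 1) / ((Real.exp t : ℂ) - 1) *
      (MPL k (1 - Real.exp (-t)) : ℂ) =
      (((m.factorial : ℝ) * (φ m 0 t * (F k t * g t)).toReal : ℝ) : ℂ) := by
    intro t ht
    have ht' : 0 < t := ht
    have h2 := one_sub_exp_pos ht'
    have h3 := exp_sub_one_pos ht'
    rw [MPL_eq _ _ h2.le, add_sub_cancel_right, Complex.cpow_natCast]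
    have : (φ m 0 t * (F k t * g t)).toReal = t ^ m / (m.factorial : ℝ) *
      ((L k (ENNReal.ofReal (1 - Real.exp (-t)))).toReal * (1 / (Real.exp t - 1))) := by
      rw [ENNReal.toReal_mul, ENNReal.toReal_mul, φ, g, F, zt,
        ENNReal.toReal_ofReal (by positivity), ENNReal.toReal_ofReal (by positivity)]
      simp
    rw [this]
    have hm : (m.factorial : ℂ) ≠ 0 := by exact_mod_cast m.factorial_ne_zero
    push_cast
    field_simp
  rw [setIntegral_congr_fun measurableSet_Ioi h1, integral_complex_ofReal, integral_const_mul,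
    integral_toReal]
  · rw [lintegral_φ_g, tsum_I k hk, Complex.Gamma_nat_eq_factorial]
    have hm : (m.factorial : ℂ) ≠ 0 := by exact_mod_cast m.factorial_ne_zero
    push_cast
    field_simp
  · fun_prop
  · refine (ae_restrict_iff' measurableSet_Ioi).mpr (ae_of_all _ fun t ht => ?_)
    exact ENNReal.mul_lt_top ENNReal.ofReal_lt_top
      (ENNReal.mul_lt_top (F_ne_top k hk t ht).lt_top ENNReal.ofReal_lt_top)

end AK

theorem stmt9 (k : List ℕ) (hk : k ≠ []) (hkpos : ∀ a ∈ k, 0 < a) (m : ℕ) :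
    xiAK (m + 1) k =
      ∑ j ∈ Finset.Nat.antidiagonalTuple (k.sum + 1 - k.length) m,
        ((∏ i : Fin (k.sum + 1 - k.length), Nat.choose
            ((plusOne (HDual k.reverse)).getD (i : ℕ) 0 + j i - 1) (j i) : ℕ) : ℂ) *
          ((MZV (List.ofFn fun i : Fin (k.sum + 1 - k.length) =>
            (plusOne (HDual k.reverse)).getD (i : ℕ) 0 + j i) : ℝ) : ℂ) := by
  have hlen := AK.length_D k hkpos
  have hrev := AK.plusOne_HDual_reverse k hk
  rw [AK.xi_eq k hkpos, AK.P_eq_rev _ _ hlen, ← hrev, ENNReal.toReal_sum, Complex.ofReal_sum]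
  · refine Finset.sum_congr rfl fun j _ => ?_
    rw [ENNReal.toReal_mul, ENNReal.toReal_natCast, Complex.ofReal_mul, Complex.ofReal_natCast,
      AK.MZV_eq _ _ (List.length_ofFn)]
    congr 4
    funext i x
    simp [List.getD_eq_getElem?_getD]
  · intro j _
    refine ENNReal.mul_ne_top (ENNReal.natCast_ne_top _) ?_
    have hd : 0 < k.sum + 1 - k.length := by
      rw [← hlen]
      exact List.length_pos_iff.mpr (AK.fromWord_ne_nil _)
    have hlen2 : (plusOne (HDual k.reverse)).length = k.sum + 1 - k.length := by
      rw [hrev, List.length_reverse, hlen]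
    have h0 : 2 ≤ (plusOne (HDual k.reverse)).getD 0 0 := by
      have hp := AK.fromWord_pos ((toWord k.reverse).map fun b => !b)
      have hn := AK.fromWord_ne_nil ((toWord k.reverse).map fun b => !b)
      unfold HDual
      rcases hw : fromWord ((toWord k.reverse).map fun b => !b) with _ | ⟨a, t⟩
      · exact absurd hw hn
      · have := hp a (by simp [hw])
        simp [plusOne]
        omega
    have hpos : ∀ a ∈ plusOne (HDual k.reverse), 0 < a := by
      intro a ha
      rw [hrev] at ha
      exact AK.fromWord_pos _ a (by simpa using ha)
    have key := AK.Ch_ne_top (List.ofFn fun i : Fin (k.sum + 1 - k.length) =>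
      (plusOne (HDual k.reverse)).getD (i : ℕ) 0 + j i) _ (List.length_ofFn) ?_ ?_ ?_
    · convert key using 2
      funext i x
      simp [List.getD_eq_getElem?_getD]
    · intro h
      have := congrArg List.length h
      simp only [List.length_ofFn, List.length_nil] at this
      omega
    · rw [List.getD_eq_getElem _ _ (by simpa using hd)]
      simp only [List.getElem_ofFn]
      omega
    · intro a ha
      rw [List.mem_ofFn] at ha
      obtain ⟨i, rfl⟩ := ha
      have hi : (i : ℕ) < (plusOne (HDual k.reverse)).length := by rw [hlen2]; exact i.2
      have := hpos _ (List.getElem_mem hi)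
      simp only [List.getD_eq_getElem _ _ hi]
      omega
end

section
/- Let k=(k_1,…,k_r) be a composition, let m∈ℕ_0, and set n=|k|+1−dep(k). Then ψ(m+1;k) = Σ_{|j|=m, dep(j)=n} B((←k^∨)_+; j)·T((←k^∨)_+ + j), where the sum is over j∈ℕ_0^n with j_1+⋯+j_n=m. -/
open scoped BigOperators
open MeasureTheory

section Helpers
open Finset

noncomputable def Oi (q n : ℕ) : ENNReal := if q < n ∧ (n + q) % 2 = 1 then 1 else 0

noncomputable def Kr (n a m : ℕ) (s : ℝ) : ℝ :=
  ∑ p ∈ antidiagonal m, s ^ p.1 / (p.1.factorial : ℝ) * Real.exp (-(n * s)) *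
    ((Nat.choose (a + p.2 - 1) p.2 : ℝ) / (n : ℝ) ^ (a + p.2))

lemma Kr_nonneg (n a m : ℕ) {s : ℝ} (hs : 0 ≤ s) : 0 ≤ Kr n a m s := by
  unfold Kr; positivity

lemma Kr_cont (n a m : ℕ) : Continuous (Kr n a m) := by
  unfold Kr
  fun_prop

lemma Kr_zero (n m : ℕ) (s : ℝ) : Kr n 0 m s = s ^ m / (m.factorial : ℝ) * Real.exp (-(n * s)) := by
  unfold Kr
  rw [Finset.sum_eq_single (m, 0)]
  · simp
  · rintro ⟨i, p⟩ h1 h2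
    rw [HasAntidiagonal.mem_antidiagonal] at h1; simp only at h1
    have : p ≠ 0 := by rintro rfl; simp_all
    simp only [zero_add]
    rw [Nat.choose_eq_zero_of_lt (by omega)]; simp
  · simp

lemma Kr_deriv (n a m : ℕ) (hn : 0 < n) (s : ℝ) : HasDerivAt (Kr n (a+1) m) (-Kr n a m s) s := by
  have hn' : (n:ℝ) ≠ 0 := by positivity
  have h0 : ∀ i : ℕ, ∀ c : ℝ, HasDerivAt (fun s : ℝ => s ^ i / (i.factorial : ℝ) * Real.exp (-(n * s)) * c)
      (((i:ℝ) * s ^ (i-1) / (i.factorial : ℝ) * Real.exp (-(n * s)) + s ^ i / (i.factorial : ℝ) * (Real.exp (-(n * s)) * (-(n * 1)))) * c) s := by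
    intro i c
    refine HasDerivAt.mul_const (HasDerivAt.mul ?_ ?_) c
    · exact (hasDerivAt_pow i s).div_const _
    · exact (((hasDerivAt_id s).const_mul (n:ℝ)).neg).exp
  have h1 := HasDerivAt.fun_sum (u := antidiagonal m) (fun p _ => h0 p.1
    ((Nat.choose (a + 1 + p.2 - 1) p.2 : ℝ) / (n : ℝ) ^ (a + 1 + p.2)))
  refine h1.congr_deriv ?_
  unfold Kr
  simp only [add_mul, Finset.sum_add_distrib]
  have e1 : ∑ p ∈ antidiagonal m, ((p.1:ℝ) * s ^ (p.1-1) / (p.1.factorial : ℝ) * Real.exp (-(n * s)) * ((Nat.choose (a + 1 + p.2 - 1) p.2 : ℝ) / (n : ℝ) ^ (a + 1 + p.2)))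
     = ∑ p ∈ antidiagonal m, (s ^ p.1 / (p.1.factorial : ℝ) * Real.exp (-(n * s)) * (if p.2 = 0 then 0 else (Nat.choose (a + p.2 - 1) (p.2-1) : ℝ) / (n : ℝ) ^ (a + p.2))) := by
    cases m with
    | zero => simp
    | succ m =>
      rw [Finset.Nat.sum_antidiagonal_succ, Finset.Nat.sum_antidiagonal_succ']
      simp only [Nat.cast_zero, zero_mul, zero_div, zero_add, if_true, mul_zero]
      refine Finset.sum_congr rfl ?_
      rintro ⟨i, p⟩ _
      simp only [Nat.add_eq_zero_iff, one_ne_zero, and_false, if_false, Nat.add_sub_cancel, Nat.factorial_succ]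
      have e : a + 1 + p - 1 = a + (p+1) - 1 := by omega
      have e' : a + 1 + p = a + (p+1) := by omega
      rw [e, e']
      push_cast
      have : ((i:ℝ)+1) ≠ 0 := by positivity
      have : (i.factorial:ℝ) ≠ 0 := by positivity
      field_simp
  rw [e1, ← Finset.sum_add_distrib, ← Finset.sum_neg_distrib]
  refine Finset.sum_congr rfl ?_
  rintro ⟨i, p⟩ _
  simp only
  cases p with
  | zero =>
    simp
    field_simp
    ring
  | succ p =>
    have e : a + 1 + (p+1) - 1 = (a + p) + 1 := by omega
    have e' : a + (p+1) - 1 = a + p := by omega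
    have e2 : a + 1 + (p+1) = a + (p+1) + 1 := by omega
    rw [e, e', e2, Nat.choose_succ_succ]
    simp only [Nat.add_eq_zero_iff, one_ne_zero, and_false, if_false, Nat.add_sub_cancel]
    push_cast
    rw [pow_succ (n:ℝ) (a + (p+1))]
    have : (i.factorial:ℝ) ≠ 0 := by positivity
    field_simp
    ring

lemma Kr_tendsto (n a m : ℕ) (hn : 0 < n) : Filter.Tendsto (Kr n a m) Filter.atTop (nhds 0) := by
  have hn' : (0:ℝ) < n := by positivity
  unfold Kr
  rw [show (0:ℝ) = ∑ p ∈ antidiagonal m, 0 by simp]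
  refine tendsto_finsetSum _ (fun p _ => ?_)
  have h := (Real.tendsto_pow_mul_exp_neg_atTop_nhds_zero p.1).comp
    (Filter.tendsto_id.const_mul_atTop hn')
  have h2 := h.mul_const (1 / (n:ℝ)^p.1 / (p.1.factorial : ℝ) * ((Nat.choose (a + p.2 - 1) p.2 : ℝ) / (n : ℝ) ^ (a + p.2)))
  rw [zero_mul] at h2
  refine h2.congr (fun s => ?_)
  simp only [Function.comp, id]
  rw [mul_pow]
  field_simp

lemma lint_Kr (n a m : ℕ) (hn : 0 < n) {s : ℝ} (hs : 0 ≤ s) :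
    ∫⁻ t in Set.Ioi s, ENNReal.ofReal (Kr n a m t) = ENNReal.ofReal (Kr n (a+1) m s) := by
  have hd : ∀ x ∈ Set.Ici s, HasDerivAt (Kr n (a+1) m) (-Kr n a m x) x := fun x _ => Kr_deriv n a m hn x
  have hneg : ∀ x ∈ Set.Ioi s, -Kr n a m x ≤ 0 := fun x hx => by
    have := Kr_nonneg n a m (hs.trans (le_of_lt hx)); linarith
  have hi := integrableOn_Ioi_deriv_of_nonpos' hd hneg (Kr_tendsto n (a+1) m hn)
  have he := integral_Ioi_of_hasDerivAt_of_nonpos' hd hneg (Kr_tendsto n (a+1) m hn)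
  have hi' : IntegrableOn (Kr n a m) (Set.Ioi s) := by simpa using hi.neg
  rw [← ofReal_integral_eq_lintegral_ofReal hi']
  · rw [integral_neg] at he
    congr 1; linarith
  · filter_upwards [ae_restrict_mem measurableSet_Ioi] with x hx
    exact Kr_nonneg n a m (hs.trans (le_of_lt hx))

/-- geometric sums -/
lemma geo (q : ℕ) {x : ℝ} (h0 : 0 ≤ x) (h1 : x < 1) :
    ∑' n, Oi q n * ENNReal.ofReal (x ^ n) = ENNReal.ofReal (x ^ (q+1) / (1 - x^2)) := by
  have hx2 : x ^ 2 < 1 := by nlinarith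
  have hinj : Function.Injective (fun i : ℕ => q + 1 + 2 * i) := by
    intro a b h; simp at h; omega
  rw [← hinj.tsum_eq]
  · have : ∀ i : ℕ, Oi q (q + 1 + 2 * i) * ENNReal.ofReal (x ^ (q + 1 + 2 * i)) = ENNReal.ofReal (x^(q+1) * (x^2)^i) := by
      intro i
      rw [Oi, if_pos (by omega), one_mul, pow_add, pow_mul]
    simp only [this]
    rw [← ENNReal.ofReal_tsum_of_nonneg]
    · rw [tsum_mul_left, tsum_geometric_of_lt_one (by positivity) hx2]; rfl
    · intro i; positivity
    · exact (summable_geometric_of_lt_one (by positivity) hx2).mul_left _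
  · intro n hn
    have : q < n ∧ (n + q) % 2 = 1 := by
      by_contra h
      simp [Oi, h] at hn
    refine ⟨(n - q - 1) / 2, ?_⟩
    simp only
    omega

lemma geo_exp (q : ℕ) {t : ℝ} (ht : 0 < t) :
    ENNReal.ofReal (Real.exp (-(q * t))) * ENNReal.ofReal (1 / Real.sinh t) =
     ∑' n, Oi q n * (2 * ENNReal.ofReal (Real.exp (-(n * t)))) := by
  have h1 : Real.exp (-t) < 1 := by simpa using ht
  have h := geo q (Real.exp_pos (-t)).le h1
  have e : ∀ n : ℕ, Real.exp (-t) ^ n = Real.exp (-(n * t)) := by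
    intro n; rw [← Real.exp_nat_mul]; congr 1; ring
  simp only [mul_left_comm _ (2:ENNReal)]
  rw [ENNReal.tsum_mul_left]
  simp only [← e]
  rw [h, ← ENNReal.ofReal_mul (by positivity), show (2:ENNReal) = ENNReal.ofReal 2 by simp, ← ENNReal.ofReal_mul (by norm_num)]
  congr 1
  rw [Real.sinh_eq, pow_succ]
  have h3 : Real.exp t = (Real.exp (-t))⁻¹ := by rw [Real.exp_neg, inv_inv]
  rw [h3]
  have := Real.exp_pos (-t)
  have h4 : 1 - Real.exp (-t) ^ 2 ≠ 0 := by nlinarith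
  have h5 : (Real.exp (-t))⁻¹ - Real.exp (-t) ≠ 0 := by
    intro h; apply h4; field_simp at h; linarith
  field_simp

noncomputable def th (t : ℝ) : ℝ := Real.tanh (t / 2)

lemma th_nonneg {t : ℝ} (ht : 0 ≤ t) : 0 ≤ th t := by
  unfold th; rw [Real.tanh_eq_sinh_div_cosh]
  have := Real.sinh_nonneg_iff.2 (show 0 ≤ t/2 by linarith)
  have := Real.cosh_pos (t/2)
  positivity
lemma th_pos {t : ℝ} (ht : 0 < t) : 0 < th t := by
  unfold th; rw [Real.tanh_eq_sinh_div_cosh]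
  have := Real.sinh_pos_iff.2 (show 0 < t/2 by linarith)
  have := Real.cosh_pos (t/2)
  positivity
lemma th_lt_one (t : ℝ) : th t < 1 := Real.tanh_lt_one _

lemma th_sinh {t : ℝ} (ht : 0 < t) : 1 / Real.sinh t = (1 - th t ^ 2) / (2 * th t) := by
  have h := Real.sinh_pos_iff.2 (show 0 < t/2 by linarith)
  have h2 := Real.cosh_pos (t/2)
  have h3 : Real.sinh t = 2 * Real.sinh (t/2) * Real.cosh (t/2) := by
    rw [← Real.sinh_two_mul]; congr 1; ring
  unfold th; rw [Real.tanh_eq_sinh_div_cosh, h3]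
  field_simp
  rw [Real.cosh_sq]; ring

lemma th_deriv (t : ℝ) : HasDerivAt th ((1 - th t ^ 2) / 2) t := by
  have h2 := Real.cosh_pos (t/2)
  have hh : HasDerivAt (fun t : ℝ => t/2) (1/2) t := (hasDerivAt_id t).div_const 2
  have := (hh.sinh).div (hh.cosh) h2.ne'
  have e : th = (fun t => Real.sinh (t/2)) / (fun t => Real.cosh (t/2)) := by
    ext t; simp [th, Real.tanh_eq_sinh_div_cosh]
  rw [e]
  refine this.congr_deriv ?_
  simp only [Pi.div_apply]
  field_simp

lemma th_zero : th 0 = 0 := by simp [th]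
lemma th_cont : Continuous th := continuous_iff_continuousAt.2 fun t => (th_deriv t).continuousAt

lemma lint_th (n : ℕ) (hn : 0 < n) {t : ℝ} (ht : 0 ≤ t) :
    ∫⁻ s in Set.Ioo 0 t, ENNReal.ofReal (1 / Real.sinh s) * ENNReal.ofReal (th s ^ n) =
     ENNReal.ofReal (th t ^ n / n) := by
  have hc : ContinuousOn (fun s => th s ^ n / n) (Set.Icc 0 t) := by
    have := th_cont
    fun_prop
  have hd : ∀ x ∈ Set.Ioo 0 t, HasDerivAt (fun s => th s ^ n / n) (1 / Real.sinh x * th x ^ n) x := by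
    intro x hx
    refine (((th_deriv x).pow n).div_const (n:ℝ)).congr_deriv ?_
    rw [th_sinh hx.1]
    have := th_pos hx.1
    obtain ⟨k, rfl⟩ := Nat.exists_eq_add_of_lt hn
    simp
    field_simp
    ring
  have hp : ∀ x ∈ Set.Ioo 0 t, 0 ≤ 1 / Real.sinh x * th x ^ n := by
    intro x hx
    have := th_pos hx.1
    have := Real.sinh_pos_iff.2 hx.1
    positivity
  have hi := intervalIntegral.integrableOn_deriv_of_nonneg hc hd hp
  have he := intervalIntegral.integral_eq_sub_of_hasDerivAt_of_le ht hc hd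
    ((intervalIntegrable_iff_integrableOn_Ioc_of_le ht).2 hi)
  rw [intervalIntegral.integral_of_le ht, integral_Ioc_eq_integral_Ioo] at he
  rw [th_zero, zero_pow hn.ne', zero_div, sub_zero] at he
  rw [← he, ofReal_integral_eq_lintegral_ofReal (hi.mono_set Set.Ioo_subset_Ioc_self)]
  · refine setLIntegral_congr_fun measurableSet_Ioo (fun x hx => ?_)
    rw [ENNReal.ofReal_mul]
    have := Real.sinh_pos_iff.2 hx.1
    positivity
  · filter_upwards [ae_restrict_mem measurableSet_Ioo] with x hx using hp x hx

lemma geo_th (q : ℕ) {t : ℝ} (ht : 0 < t) :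
    ENNReal.ofReal (th t ^ q) =
     ∑' n, Oi q n * (2 * (ENNReal.ofReal (1 / Real.sinh t) * ENNReal.ofReal (th t ^ n))) := by
  have h1 := th_lt_one t
  have h0 := th_pos ht
  have h := geo q h0.le h1
  simp only [mul_left_comm (Oi q _), ENNReal.tsum_mul_left]
  rw [h, show (2:ENNReal) = ENNReal.ofReal 2 by simp, th_sinh ht]
  have h4 : 0 < 1 - th t ^ 2 := by nlinarith
  rw [← ENNReal.ofReal_mul (by positivity), ← ENNReal.ofReal_mul (by norm_num)]
  congr 1
  field_simp
  ring

lemma ad_assoc {M : Type*} [AddCommMonoid M] (f : ℕ → ℕ → ℕ → M) (m : ℕ) :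
    ∑ x ∈ antidiagonal m, ∑ y ∈ antidiagonal x.2, f x.1 y.1 y.2 =
    ∑ x ∈ antidiagonal m, ∑ y ∈ antidiagonal x.1, f y.1 y.2 x.2 := by
  rw [Finset.sum_sigma', Finset.sum_sigma']
  refine Finset.sum_nbij' (fun z => ⟨(z.1.1 + z.2.1, z.2.2), (z.1.1, z.2.1)⟩)
    (fun z => ⟨(z.2.1, z.2.2 + z.1.2), (z.2.2, z.1.2)⟩) ?_ ?_ ?_ ?_ ?_
  · rintro ⟨⟨a, b⟩, ⟨c, d⟩⟩ h
    simp only [mem_sigma, HasAntidiagonal.mem_antidiagonal] at h ⊢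
    refine ⟨?_, ?_⟩ <;> first | trivial | omega
  · rintro ⟨⟨a, b⟩, ⟨c, d⟩⟩ h
    simp only [mem_sigma, HasAntidiagonal.mem_antidiagonal] at h ⊢
    refine ⟨?_, ?_⟩ <;> first | trivial | omega
  · rintro ⟨⟨a, b⟩, ⟨c, d⟩⟩ h
    simp only [mem_sigma, HasAntidiagonal.mem_antidiagonal] at h ⊢
    obtain ⟨h1, h2⟩ := h
    subst h2; rfl
  · rintro ⟨⟨a, b⟩, ⟨c, d⟩⟩ h
    simp only [mem_sigma, HasAntidiagonal.mem_antidiagonal] at h ⊢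
    obtain ⟨h1, h2⟩ := h
    subst h2; rfl
  · rintro ⟨⟨a, b⟩, ⟨c, d⟩⟩ h
    rfl

noncomputable def wt (a p n : ℕ) : ENNReal :=
  ENNReal.ofReal ((Nat.choose (a + p - 1) p : ℝ) / (n : ℝ) ^ (a + p))

noncomputable def Cf : List ℕ → ℕ → ℕ → ENNReal
  | [], n, m => if n = 0 ∧ m = 0 then 1 else 0
  | a :: l, n, m => ∑ p ∈ antidiagonal m, wt a p.1 n * (2 * ∑' q, Oi q n * Cf l q p.2)

noncomputable def Df (l : List ℕ) (n m : ℕ) : ENNReal := 2 * ∑' q, Oi q n * Cf l q m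

lemma Cf_cons (a : ℕ) (l : List ℕ) (n m : ℕ) :
    Cf (a :: l) n m = ∑ p ∈ antidiagonal m, wt a p.1 n * Df l n p.2 := rfl

lemma Df_zero (l : List ℕ) (m : ℕ) : Df l 0 m = 0 := by
  simp [Df, Oi]

noncomputable def ee (n i : ℕ) (s : ℝ) : ENNReal :=
  ENNReal.ofReal (s ^ i / (i.factorial : ℝ) * Real.exp (-(n * s)))

noncomputable def Ef (l : List ℕ) (m : ℕ) (s : ℝ) : ENNReal :=
  ∑' n, ∑ p ∈ antidiagonal m, ee n p.1 s * Cf l n p.2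

lemma Kr_eq (n a m : ℕ) {s : ℝ} (hs : 0 ≤ s) :
    ENNReal.ofReal (Kr n a m s) = ∑ p ∈ antidiagonal m, ee n p.1 s * wt a p.2 n := by
  unfold Kr
  rw [ENNReal.ofReal_sum_of_nonneg (by intros; positivity)]
  refine Finset.sum_congr rfl fun p _ => ?_
  rw [ENNReal.ofReal_mul (by positivity)]; rfl

lemma Ef_cons (a : ℕ) (l : List ℕ) (m : ℕ) {s : ℝ} (hs : 0 ≤ s) :
    Ef (a :: l) m s = ∑' n, ∑ p ∈ antidiagonal m, ENNReal.ofReal (Kr n a p.1 s) * Df l n p.2 := by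
  unfold Ef
  congr 1; ext n
  simp only [Cf_cons, Kr_eq _ _ _ hs, Finset.mul_sum, Finset.sum_mul]
  rw [ad_assoc (fun i p v => ee n i s * (wt a p n * Df l n v)) m]
  simp only [mul_assoc]

lemma lint_sum (a : ℕ) (l : List ℕ) (m : ℕ) {s : ℝ} (hs : 0 ≤ s) :
    ∫⁻ t in Set.Ioi s, ∑' n, ∑ p ∈ antidiagonal m, ENNReal.ofReal (Kr n a p.1 t) * Df l n p.2 =
      Ef ((a + 1) :: l) m s := by
  have hm : ∀ n a m, Measurable (fun t => ENNReal.ofReal (Kr n a m t)) :=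
    fun n a m => (Kr_cont n a m).measurable.ennreal_ofReal
  rw [Ef_cons _ _ _ hs, lintegral_tsum]
  · congr 1; ext n
    rw [lintegral_finsetSum _ (fun p _ => (hm _ _ _).mul_const _)]
    refine Finset.sum_congr rfl fun p _ => ?_
    rw [lintegral_mul_const _ (hm _ _ _)]
    rcases Nat.eq_zero_or_pos n with rfl | hn
    · simp [Df_zero]
    · rw [lint_Kr n a p.1 hn hs]
  · intro n
    refine (Finset.measurable_fun_sum _ (fun p _ => (hm _ _ _).mul_const _)).aemeasurable

lemma Ef_up (a : ℕ) (l : List ℕ) (m : ℕ) {s : ℝ} (hs : 0 ≤ s) :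
    ∫⁻ t in Set.Ioi s, Ef (a :: l) m t = Ef ((a + 1) :: l) m s := by
  rw [← lint_sum a l m hs]
  refine setLIntegral_congr_fun measurableSet_Ioi (fun t ht => ?_)
  exact Ef_cons _ _ _ (hs.trans (le_of_lt ht))

lemma Ef_new (l : List ℕ) (m : ℕ) {s : ℝ} (hs : 0 ≤ s) :
    ∫⁻ t in Set.Ioi s, ENNReal.ofReal (1 / Real.sinh t) * Ef l m t = Ef (1 :: l) m s := by
  rw [← lint_sum 0 l m hs]
  refine setLIntegral_congr_fun measurableSet_Ioi (fun t ht => ?_)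
  have ht0 : 0 < t := lt_of_le_of_lt hs ht
  have he : ∀ n i, ee n i t = ENNReal.ofReal (t ^ i / (i.factorial : ℝ)) * ENNReal.ofReal (Real.exp (-(n * t))) := by
    intro n i
    rw [ee, ENNReal.ofReal_mul (by positivity)]
  simp only [Kr_zero]
  change _ = ∑' n, ∑ p ∈ antidiagonal m, ee n p.1 t * Df l n p.2
  unfold Ef Df
  rw [← ENNReal.tsum_mul_left]
  have h1 : ∀ n, ENNReal.ofReal (1 / Real.sinh t) * ∑ p ∈ antidiagonal m, ee n p.1 t * Cf l n p.2
     = ∑' n', ∑ p ∈ antidiagonal m, Oi n n' * (2 * ee n' p.1 t) * Cf l n p.2 := by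
    intro q
    rw [Summable.tsum_finsetSum (fun _ _ => ENNReal.summable), Finset.mul_sum]
    refine Finset.sum_congr rfl fun p _ => ?_
    rw [ENNReal.tsum_mul_right, he, ← mul_assoc]
    congr 1
    rw [mul_left_comm, mul_comm (ENNReal.ofReal (1 / Real.sinh t)), geo_exp q ht0, ← ENNReal.tsum_mul_left]
    congr 1; ext n
    rw [he]; ring
  simp only [h1]
  rw [ENNReal.tsum_comm]
  congr 1; ext n
  rw [Summable.tsum_finsetSum (fun _ _ => ENNReal.summable)]
  refine Finset.sum_congr rfl fun p _ => ?_
  rw [← ENNReal.tsum_mul_left, ← ENNReal.tsum_mul_left]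
  congr 1; ext q
  ring

noncomputable def om (b : Bool) (s : ℝ) : ENNReal :=
  if b then 1 else ENNReal.ofReal (1 / Real.sinh s)

lemma om_meas (b : Bool) : Measurable (om b) := by
  unfold om
  cases b
  · simp only [Bool.false_eq_true, if_false]
    exact (measurable_const.div Real.continuous_sinh.measurable).ennreal_ofReal
  · simp

noncomputable def Ff : List Bool → ℝ → ENNReal
  | [], _ => 1
  | b :: w, t => ∫⁻ s in Set.Ioi 0, (if s < t then 1 else 0) * (om b s * Ff w s)

lemma Ff_meas : ∀ w, Measurable (Ff w)
  | [] => measurable_const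
  | b :: w => by
    have := Ff_meas w
    have h2 := om_meas b
    change Measurable (fun t => ∫⁻ s in Set.Ioi 0, (if s < t then 1 else 0) * (om b s * Ff w s))
    refine Measurable.lintegral_prod_right' (f := fun z : ℝ × ℝ => (if z.2 < z.1 then (1:ENNReal) else 0) * (om b z.2 * Ff w z.2)) ?_
    refine Measurable.mul ?_ ?_
    · exact Measurable.ite (measurableSet_lt measurable_snd measurable_fst) measurable_const measurable_const
    · exact (h2.comp measurable_snd).mul (this.comp measurable_snd)

def stp (l : List ℕ) (b : Bool) : List ℕ :=
  if b then (match l with | [] => [1] | a :: t => (a + 1) :: t) else 1 :: l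

lemma Ef_meas (l : List ℕ) (m : ℕ) : Measurable (Ef l m) := by
  unfold Ef
  refine Measurable.tsum fun n => Finset.measurable_fun_sum _ (fun p _ => Measurable.mul_const ?_ _)
  unfold ee
  refine Measurable.ennreal_ofReal (Continuous.measurable ?_)
  fun_prop

lemma Ef_stp (l : List ℕ) (hl : l ≠ []) (m : ℕ) (b : Bool) {s : ℝ} (hs : 0 ≤ s) :
    ∫⁻ t in Set.Ioi s, om b t * Ef l m t = Ef (stp l b) m s := by
  cases b
  · exact Ef_new l m hs
  · cases l with
    | nil => exact absurd rfl hl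
    | cons a l => simpa [om, stp] using Ef_up a l m hs

lemma stp_ne (l : List ℕ) (b : Bool) : stp l b ≠ [] := by
  cases b <;> cases l <;> simp [stp]

lemma pairing (m : ℕ) : ∀ (w : List Bool) (l : List ℕ) (_ : l ≠ []) (g : ℝ → ENNReal) (_ : Measurable g)
    (_ : ∀ s, 0 ≤ s → ∫⁻ t in Set.Ioi s, g t = Ef l m s),
    ∫⁻ t in Set.Ioi 0, g t * Ff w t = Ef (w.foldl stp l) m 0
  | [], l, hl, g, hg, h => by simpa [Ff] using h 0 le_rfl
  | b :: w, l, hl, g, hg, h => by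
    have h1 := Ff_meas w
    have h2 := om_meas b
    rw [List.foldl_cons, ← pairing m w (stp l b) (stp_ne l b) (fun s => om b s * Ef l m s)
      (h2.mul (Ef_meas l m)) (fun s hs => Ef_stp l hl m b hs)]
    have e1 : ∀ t, g t * Ff (b :: w) t = ∫⁻ s in Set.Ioi 0, g t * ((if s < t then 1 else 0) * (om b s * Ff w s)) := by
      intro t
      rw [lintegral_const_mul]
      · rfl
      · refine Measurable.mul ?_ (h2.mul h1)
        exact Measurable.ite measurableSet_Iio measurable_const measurable_const
    simp only [e1]
    rw [lintegral_lintegral_swap]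
    · refine setLIntegral_congr_fun measurableSet_Ioi (fun s hs => ?_)
      have hs0 : (0:ℝ) < s := hs
      rw [← h s hs0.le]
      have e2 : ∀ t, g t * ((if s < t then 1 else 0) * (om b s * Ff w s)) =
          (om b s * Ff w s) * (Set.Ioi s).indicator g t := by
        intro t
        by_cases hst : s < t
        · simp [hst]; ring
        · simp [hst]
      simp only [e2]
      rw [lintegral_const_mul _ (hg.indicator measurableSet_Ioi), lintegral_indicator measurableSet_Ioi,
        Measure.restrict_restrict measurableSet_Ioi, Set.inter_eq_left.2 (Set.Ioi_subset_Ioi hs0.le)]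
      ring
    · refine Measurable.aemeasurable ?_
      refine Measurable.mul (hg.comp measurable_fst) (Measurable.mul ?_ ((h2.comp measurable_snd).mul (h1.comp measurable_snd)))
      exact Measurable.ite (measurableSet_lt measurable_snd measurable_fst) measurable_const measurable_const

lemma Ef_nil (m : ℕ) (s : ℝ) : Ef [] m s = ENNReal.ofReal (s ^ m / (m.factorial : ℝ)) := by
  unfold Ef
  rw [tsum_eq_single 0]
  · rw [Finset.sum_eq_single (m, 0)]
    · simp [ee, Cf]
    · rintro ⟨i, p⟩ h1 h2
      rw [HasAntidiagonal.mem_antidiagonal] at h1; simp only at h1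
      have : p ≠ 0 := by rintro rfl; simp_all
      simp [Cf, this]
    · simp
  · intro n hn
    simp [Cf, hn]

lemma pairing0 (m : ℕ) (w : List Bool) :
    ∫⁻ t in Set.Ioi 0, ENNReal.ofReal (1 / Real.sinh t) * ENNReal.ofReal (t ^ m / (m.factorial : ℝ)) * Ff w t
      = Ef (w.foldl stp [1]) m 0 := by
  have h := pairing m w [1] (by simp) (fun t => om false t * Ef [] m t) ((om_meas _).mul (Ef_meas _ _))
    (fun s hs => Ef_new [] m hs)
  simpa [om, Ef_nil] using h

/-- A side -/
noncomputable def Af (k : List ℕ) (t : ℝ) : ENNReal := ∑' n, ENNReal.ofReal (th t ^ n) * Cf k n 0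

lemma Cf_cons0 (a : ℕ) (l : List ℕ) (n : ℕ) :
    Cf (a :: l) n 0 = ENNReal.ofReal (1 / (n:ℝ)^a) * Df l n 0 := by
  simp [Cf_cons, wt]

lemma Af_nil (t : ℝ) : Af [] t = 1 := by
  unfold Af
  rw [tsum_eq_single 0]
  · simp [Cf]
  · intro n hn; simp [Cf, hn]

lemma Ff_cons (b : Bool) (w : List Bool) (t : ℝ) :
    Ff (b :: w) t = ∫⁻ s in Set.Ioo 0 t, om b s * Ff w s := by
  have : ∀ s, (if s < t then 1 else 0) * (om b s * Ff w s) = (Set.Iio t).indicator (fun s => om b s * Ff w s) s := by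
    intro s
    by_cases h : s < t <;> simp [h]
  simp only [Ff, this]
  rw [lintegral_indicator measurableSet_Iio, Measure.restrict_restrict measurableSet_Iio, Set.inter_comm, Set.Ioi_inter_Iio]

lemma lint_A (a : ℕ) (k : List ℕ) {t : ℝ} (ht : 0 ≤ t) :
    ∫⁻ s in Set.Ioo 0 t, ∑' n : ℕ, (ENNReal.ofReal (1 / Real.sinh s) * ENNReal.ofReal (th s ^ n)) *
      (ENNReal.ofReal (1 / (n:ℝ)^a) * Df k n 0) = Af ((a+1) :: k) t := by
  have hm : ∀ n, Measurable (fun s => ENNReal.ofReal (1 / Real.sinh s) * ENNReal.ofReal (th s ^ n)) := by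
    intro n
    exact ((measurable_const.div Real.continuous_sinh.measurable).ennreal_ofReal).mul (th_cont.measurable.pow_const n).ennreal_ofReal
  rw [lintegral_tsum (fun n => ((hm n).mul_const _).aemeasurable)]
  unfold Af
  congr 1; ext n
  rw [lintegral_mul_const _ (hm n)]
  rcases Nat.eq_zero_or_pos n with rfl | hn
  · simp [Cf_cons0, Df_zero]
  · rw [lint_th n hn ht, Cf_cons0, ← mul_assoc, ← mul_assoc]
    have := th_nonneg ht
    rw [← ENNReal.ofReal_mul (by positivity), ← ENNReal.ofReal_mul (by positivity)]
    congr 2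
    rw [pow_succ]
    field_simp

lemma Af_step (a : ℕ) (k : List ℕ) {t : ℝ} (ht : 0 ≤ t) :
    ∫⁻ s in Set.Ioo 0 t, om false s * Af (a :: k) s = Af ((a+1) :: k) t := by
  rw [← lint_A a k ht]
  refine setLIntegral_congr_fun measurableSet_Ioo (fun s hs => ?_)
  simp only [om, Bool.false_eq_true, if_false, Af]
  rw [← ENNReal.tsum_mul_left]
  simp only [Cf_cons0, mul_assoc]

lemma Af_new (k : List ℕ) {t : ℝ} (ht : 0 ≤ t) :
    ∫⁻ s in Set.Ioo 0 t, om true s * Af k s = Af (1 :: k) t := by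
  rw [← lint_A 0 k ht]
  refine setLIntegral_congr_fun measurableSet_Ioo (fun s hs => ?_)
  simp only [om, if_true, Af, one_mul, pow_zero, div_one, ENNReal.ofReal_one]
  unfold Df
  have h1 : ∀ q, ENNReal.ofReal (th s ^ q) * Cf k q 0 =
     ∑' n, Oi q n * (2 * (ENNReal.ofReal (1 / Real.sinh s) * ENNReal.ofReal (th s ^ n))) * Cf k q 0 := by
    intro q
    rw [ENNReal.tsum_mul_right, ← geo_th q hs.1]
  simp only [h1]
  rw [ENNReal.tsum_comm]
  congr 1; ext n
  rw [← ENNReal.tsum_mul_left, ← ENNReal.tsum_mul_left]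
  congr 1; ext q; ring

def wd : List ℕ → List Bool
  | [] => []
  | a :: k => List.replicate (a - 1) false ++ true :: wd k

lemma Af_wd : ∀ (k : List ℕ) (_ : ∀ a ∈ k, 0 < a) (t : ℝ) (_ : 0 ≤ t), Af k t = Ff (wd k) t
  | [], _, t, ht => by rw [Af_nil]; rfl
  | a :: k, h, t, ht => by
    have ih := Af_wd k (fun b hb => h b (by simp [hb]))
    obtain ⟨b, rfl⟩ : ∃ b, a = b + 1 := ⟨a - 1, by have := h a (by simp); omega⟩
    clear h
    simp only [wd, Nat.add_sub_cancel]
    induction b generalizing t with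
    | zero =>
      simp only [List.replicate_zero, List.nil_append]
      rw [Ff_cons, ← Af_new k ht]
      exact setLIntegral_congr_fun measurableSet_Ioo (fun s hs => by rw [ih s hs.1.le])
    | succ b ihb =>
      rw [List.replicate_succ, List.cons_append, Ff_cons, ← Af_step (b+1) k ht]
      exact setLIntegral_congr_fun measurableSet_Ioo (fun s hs => by rw [ihb s hs.1.le])

lemma Af_le_one (a : ℕ) (ha : 0 < a) (k : List ℕ) {t : ℝ} : Af (a :: k) t ≤ Af (1 :: k) t := by
  unfold Af
  refine ENNReal.tsum_le_tsum fun n => ?_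
  rcases Nat.eq_zero_or_pos n with rfl | hn
  · simp [Cf_cons0, Df_zero]
  · rw [Cf_cons0, Cf_cons0]
    gcongr
    · exact_mod_cast hn
    · omega

lemma lint_pow_s10 (r : ℕ) {t : ℝ} (ht : 0 ≤ t) :
    ∫⁻ s in Set.Ioo 0 t, ENNReal.ofReal (s ^ r / (r.factorial : ℝ)) = ENNReal.ofReal (t ^ (r+1) / ((r+1).factorial : ℝ)) := by
  have hc : Continuous (fun s : ℝ => s ^ r / (r.factorial : ℝ)) := by fun_prop
  have hi : IntegrableOn (fun s : ℝ => s ^ r / (r.factorial : ℝ)) (Set.Ioo 0 t) :=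
    (hc.integrableOn_Icc (a := 0) (b := t)).mono_set Set.Ioo_subset_Icc_self
  rw [← ofReal_integral_eq_lintegral_ofReal hi]
  · congr 1
    rw [← integral_Ioc_eq_integral_Ioo, ← intervalIntegral.integral_of_le ht, intervalIntegral.integral_div, integral_pow, Nat.factorial_succ]
    push_cast
    have : (r.factorial:ℝ) ≠ 0 := by positivity
    have : ((r:ℝ)+1) ≠ 0 := by positivity
    simp
    field_simp
  · filter_upwards [ae_restrict_mem measurableSet_Ioo] with x hx
    have := hx.1.le
    simp only [Pi.zero_apply]
    positivity

lemma Af_bound : ∀ (k : List ℕ) (_ : ∀ a ∈ k, 0 < a) (t : ℝ) (_ : 0 ≤ t),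
    Af k t ≤ ENNReal.ofReal (t ^ k.length / (k.length.factorial : ℝ))
  | [], _, t, ht => by simp [Af_nil]
  | a :: k, h, t, ht => by
    have ih := Af_bound k (fun b hb => h b (by simp [hb]))
    refine (Af_le_one a (h a (by simp)) k).trans ?_
    rw [← Af_new k ht, List.length_cons, ← lint_pow_s10 _ ht]
    refine setLIntegral_mono' measurableSet_Ioo (fun s hs => ?_)
    simpa [om] using ih s hs.1.le

lemma Ef_at_zero (l : List ℕ) (m : ℕ) : Ef l m 0 = ∑' n, Cf l n m := by
  unfold Ef
  congr 1; ext n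
  rw [Finset.sum_eq_single (0, m)]
  · simp [ee]
  · rintro ⟨i, p⟩ h1 h2
    rw [HasAntidiagonal.mem_antidiagonal] at h1; simp only at h1
    have : i ≠ 0 := by rintro rfl; simp_all
    simp [ee, this]
  · simp

lemma Ef_one_fin (m : ℕ) (hm : 0 < m) : Ef [1] m 0 ≠ ⊤ := by
  rw [Ef_at_zero]
  have hD : ∀ n p, Df [] n p ≤ if p = 0 then 2 else 0 := by
    intro n p
    unfold Df
    rw [tsum_eq_single 0]
    · by_cases hp : p = 0 <;> simp [Cf, hp, Oi]
      split_ifs <;> simp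
    · intro q hq; simp [Cf, hq]
  have h : ∀ n, Cf [1] n m ≤ ENNReal.ofReal (1 / (n:ℝ)^(m+1)) * 2 := by
    intro n
    rw [Cf_cons, Finset.sum_eq_single (m, 0)]
    · have := hD n 0
      simp only [if_true] at this
      refine mul_le_mul' (le_of_eq ?_) this
      simp [wt, add_comm]
    · rintro ⟨i, p⟩ h1 h2
      rw [HasAntidiagonal.mem_antidiagonal] at h1; simp only at h1
      have : p ≠ 0 := by rintro rfl; simp_all
      have := hD n p
      simp_all
    · simp
  refine ne_top_of_le_ne_top ?_ (ENNReal.tsum_le_tsum h)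
  rw [ENNReal.tsum_mul_right]
  refine ENNReal.mul_ne_top ?_ (by simp)
  have hs : Summable (fun n : ℕ => 1 / (n:ℝ)^(m+1)) := Real.summable_one_div_nat_pow.2 (by omega)
  rw [← ENNReal.ofReal_tsum_of_nonneg (fun n => by positivity) hs]
  simp

lemma L_fin (k : List ℕ) (hk : k ≠ []) (hpos : ∀ a ∈ k, 0 < a) (m : ℕ) :
    ∫⁻ t in Set.Ioi 0, ENNReal.ofReal (1 / Real.sinh t) * ENNReal.ofReal (t ^ m / (m.factorial : ℝ)) * Af k t ≠ ⊤ := by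
  have hr : 0 < k.length := List.length_pos_iff.2 hk
  set r := k.length
  have h := Ef_one_fin (m + r) (by omega)
  rw [← Ef_new [] (m + r) le_rfl] at h
  refine ne_top_of_le_ne_top (ENNReal.mul_ne_top (a := ENNReal.ofReal ((m+r).factorial)) (by simp) h) ?_
  have hmm : Measurable (fun t => ENNReal.ofReal (1 / Real.sinh t) * Ef [] (m + r) t) := (om_meas false).mul (Ef_meas _ _)
  rw [← lintegral_const_mul _ hmm]
  refine setLIntegral_mono' measurableSet_Ioi (fun t ht => ?_)
  have ht0 : 0 < t := ht
  have hsh := Real.sinh_pos_iff.2 ht0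
  refine (mul_le_mul' le_rfl (Af_bound k hpos t ht0.le)).trans ?_
  rw [Ef_nil, ← ENNReal.ofReal_mul (by positivity), ← ENNReal.ofReal_mul (by positivity), ← ENNReal.ofReal_mul (by positivity),
    ← ENNReal.ofReal_mul (by positivity)]
  refine ENNReal.ofReal_le_ofReal ?_
  have e : ((m+r).factorial:ℝ) * (1 / Real.sinh t * (t ^ (m+r) / ((m+r).factorial:ℝ))) = 1 / Real.sinh t * (t ^ m * t ^ r) := by
    rw [pow_add]; field_simp
  rw [e, mul_assoc]
  refine mul_le_mul_of_nonneg_left ?_ (by positivity)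
  have h1 : (1:ℝ) ≤ m.factorial := by exact_mod_cast Nat.factorial_pos m
  have h2 : (1:ℝ) ≤ r.factorial := by exact_mod_cast Nat.factorial_pos r
  refine mul_le_mul (div_le_self (by positivity) h1) (div_le_self (by positivity) h2) (by positivity) (by positivity)

lemma sum_aT {M : Type*} [AddCommMonoid M] (N m : ℕ) (f : (Fin (N+1) → ℕ) → M) :
    ∑ j ∈ Finset.Nat.antidiagonalTuple (N+1) m, f j =
    ∑ p ∈ antidiagonal m, ∑ j ∈ Finset.Nat.antidiagonalTuple N p.2, f (Fin.cons p.1 j) := by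
  rw [Finset.sum_sigma']
  symm
  refine Finset.sum_nbij' (fun z => Fin.cons z.1.1 z.2)
    (fun j => ⟨(j 0, ∑ i, Fin.tail j i), Fin.tail j⟩) ?_ ?_ ?_ ?_ ?_
  · rintro ⟨⟨a, b⟩, j⟩ h
    simp only [mem_sigma, HasAntidiagonal.mem_antidiagonal, Finset.Nat.mem_antidiagonalTuple] at h ⊢
    rw [Fin.sum_univ_succ]
    simp only [Fin.cons_zero, Fin.cons_succ]
    omega
  · intro j h
    simp only [mem_sigma, HasAntidiagonal.mem_antidiagonal, Finset.Nat.mem_antidiagonalTuple] at h ⊢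
    rw [Fin.sum_univ_succ] at h
    exact ⟨h, trivial⟩
  · rintro ⟨⟨a, b⟩, j⟩ h
    simp only [mem_sigma, HasAntidiagonal.mem_antidiagonal, Finset.Nat.mem_antidiagonalTuple] at h
    obtain ⟨h1, h2⟩ := h
    subst h2
    simp
  · intro j h
    simp
  · intros; rfl

lemma Cf_tuple : ∀ (l : List ℕ) (n m : ℕ), Cf l n m =
    ∑ j ∈ Finset.Nat.antidiagonalTuple l.length m,
      ((∏ i : Fin l.length, Nat.choose (l.getD (i:ℕ) 0 + j i - 1) (j i) : ℕ) : ENNReal) *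
        Cf (List.ofFn fun i : Fin l.length => l.getD (i:ℕ) 0 + j i) n 0
  | [], n, m => by
    cases m with
    | zero => simp [Finset.Nat.antidiagonalTuple_zero_zero, Cf]
    | succ m =>
      have : Finset.Nat.antidiagonalTuple ([] : List ℕ).length (m+1) = ∅ := Finset.Nat.antidiagonalTuple_zero_succ m
      rw [this]; simp [Cf]
  | a :: l, n, m => by
    have ih := Cf_tuple l
    have h := sum_aT l.length m (fun j => ((∏ i : Fin (l.length+1), Nat.choose ((a::l).getD (i:ℕ) 0 + j i - 1) (j i) : ℕ) : ENNReal) *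
        Cf (List.ofFn fun i : Fin (l.length+1) => (a::l).getD (i:ℕ) 0 + j i) n 0)
    refine Eq.trans ?_ h.symm
    rw [Cf_cons]
    refine Finset.sum_congr rfl fun p _ => ?_
    simp only [List.ofFn_succ, Fin.prod_univ_succ, Fin.cons_zero, Fin.cons_succ, Fin.val_zero, Fin.val_succ,
      List.getD_cons_zero, List.getD_cons_succ, Cf_cons0]
    have hw : wt a p.1 n = (Nat.choose (a + p.1 - 1) p.1 : ENNReal) * ENNReal.ofReal (1 / (n:ℝ)^(a + p.1)) := by
      rw [wt, ← ENNReal.ofReal_natCast, ← ENNReal.ofReal_mul (by positivity)]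
      congr 1; ring
    have hD : Df l n p.2 = ∑ j ∈ Finset.Nat.antidiagonalTuple l.length p.2,
      ((∏ i : Fin l.length, Nat.choose (l.getD (i:ℕ) 0 + j i - 1) (j i) : ℕ) : ENNReal) *
        Df (List.ofFn fun i : Fin l.length => l.getD (i:ℕ) 0 + j i) n 0 := by
      unfold Df
      simp only [ih _ p.2, Finset.mul_sum]
      rw [Summable.tsum_finsetSum (fun _ _ => ENNReal.summable), Finset.mul_sum]
      refine Finset.sum_congr rfl fun j _ => ?_
      rw [← ENNReal.tsum_mul_left, ← ENNReal.tsum_mul_left, ← ENNReal.tsum_mul_left]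
      congr 1; ext q; ring
    rw [hw, hD, Finset.mul_sum]
    refine Finset.sum_congr rfl fun j _ => ?_
    push_cast
    ring

def Pd (r : ℕ) (n : Fin r → ℕ) : Prop :=
  StrictAnti n ∧ (∀ i, 0 < n i) ∧ ∀ i, n i % 2 = (r - i.val) % 2

def hd {r : ℕ} (n : Fin r → ℕ) : ℕ := if h : 0 < r then n ⟨0, h⟩ else 0

lemma hd_cons {r : ℕ} (x : ℕ) (n : Fin r → ℕ) : hd (Fin.cons x n : Fin (r+1) → ℕ) = x := by
  simp [hd]

lemma Pd_cons {r : ℕ} (x : ℕ) (n : Fin r → ℕ) :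
    Pd (r+1) (Fin.cons x n : Fin (r+1) → ℕ) ↔ Pd r n ∧ hd n < x ∧ (x + hd n) % 2 = 1 := by
  unfold Pd
  cases r with
  | zero =>
    simp [hd, Fin.forall_fin_one, StrictAnti]
  | succ r =>
    have e : hd n = n 0 := by simp [hd]; 
    rw [e]
    constructor
    · rintro ⟨h1, h2, h3⟩
      have h30 := h3 0
      have h31 := h3 1
      have h10 : (Fin.cons x n : Fin (r+1+1) → ℕ) 1 < (Fin.cons x n : Fin (r+1+1) → ℕ) 0 := h1 (by simp)
      simp only [Fin.cons_zero, Fin.cons_one, Fin.val_zero, Fin.val_one] at h30 h31 h10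
      refine ⟨⟨?_, ?_, ?_⟩, h10, by omega⟩
      · intro i j hij
        have := h1 (Fin.succ_lt_succ_iff.2 hij)
        simpa using this
      · intro i; simpa using h2 i.succ
      · intro i
        have := h3 i.succ
        simp only [Fin.cons_succ, Fin.val_succ] at this
        rw [this]; congr 1; omega
    · rintro ⟨⟨h1, h2, h3⟩, h4, h5⟩
      refine ⟨?_, ?_, ?_⟩
      · rw [Fin.strictAnti_iff_succ_lt]
        intro i
        refine Fin.cases ?_ (fun i => ?_) i
        · simpa using h4
        · have := h1 (Fin.castSucc_lt_succ (i := i))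
          rw [← Fin.succ_castSucc]
          simpa using this
      · intro i
        refine Fin.cases ?_ (fun i => ?_) i
        · simp; omega
        · simpa using h2 i
      · intro i
        refine Fin.cases ?_ (fun i => ?_) i
        · have := h3 0
          simp at this ⊢; omega
        · simp [h3 i]

open Classical in
lemma tup : ∀ (k : List ℕ) (g : ℕ → ENNReal),
    2 ^ k.length * (∑' n : Fin k.length → ℕ, if Pd k.length n then
      g (hd n) * ∏ i, ENNReal.ofReal (1 / (n i : ℝ) ^ k.get i) else 0) = ∑' n, g n * Cf k n 0
  | [], g => by
    have h0 : ∑' n, g n * Cf [] n 0 = g 0 := by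
      rw [tsum_eq_single 0 (by intro n hn; simp [Cf, hn])]; simp [Cf]
    rw [h0]
    change 2 ^ 0 * (∑' n : Fin 0 → ℕ, if Pd 0 n then
      g (hd n) * ∏ i : Fin 0, ENNReal.ofReal (1 / (n i : ℝ) ^ ([] : List ℕ).get i) else 0) = g 0
    have hP : ∀ n, Pd 0 n := fun n => ⟨fun i => i.elim0, fun i => i.elim0, fun i => i.elim0⟩
    simp [hP, hd]
  | a :: k, g => by
    have ih := tup k
    have e1 : (∑' n : Fin (a :: k).length → ℕ, if Pd (a :: k).length n then
      g (hd n) * ∏ i, ENNReal.ofReal (1 / (n i : ℝ) ^ (a :: k).get i) else 0) =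
      ∑' z : ℕ × (Fin k.length → ℕ), g z.1 * ENNReal.ofReal (1 / (z.1:ℝ)^a) *
        (if Pd k.length z.2 then Oi (hd z.2) z.1 * ∏ i, ENNReal.ofReal (1 / (z.2 i : ℝ) ^ k.get i) else 0) := by
      refine ((Fin.consEquiv (fun _ : Fin (k.length + 1) => ℕ)).tsum_eq _).symm.trans ?_
      congr 1; ext ⟨x, n⟩
      change (if Pd (k.length + 1) (Fin.cons x n : Fin (k.length+1) → ℕ) then
        g (hd (Fin.cons x n : Fin (k.length+1) → ℕ)) * ∏ i : Fin (k.length+1), ENNReal.ofReal (1 / ((Fin.cons x n : Fin (k.length+1) → ℕ) i : ℝ) ^ (a :: k).get i) else 0) = _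
      rw [hd_cons, Fin.prod_univ_succ]
      simp only [Pd_cons, Fin.cons_zero, Fin.cons_succ]
      by_cases h1 : Pd k.length n
      · by_cases h2 : hd n < x ∧ (x + hd n) % 2 = 1
        · rw [if_pos ⟨h1, h2⟩, if_pos h1, Oi, if_pos h2]
          simp only [one_mul, ← mul_assoc]
          rfl
        · rw [if_neg (fun h => h2 h.2), if_pos h1, Oi, if_neg h2]
          simp
      · rw [if_neg (fun h => h1 h.1), if_neg h1, mul_zero]
    rw [e1, ENNReal.tsum_prod', ← ENNReal.tsum_mul_left]
    congr 1; ext x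
    rw [Cf_cons0, Df]
    have := ih (fun q => Oi q x)
    rw [← this]
    simp only
    rw [ENNReal.tsum_mul_left, List.length_cons, pow_succ]
    ring

lemma tup_real (k : List ℕ) (x : ℝ) (hx : 0 ≤ x) :
    2 ^ k.length * ∑' n : {n : Fin k.length → ℕ //
        StrictAnti n ∧ (∀ i, 0 < n i) ∧ ∀ i, n i % 2 = (k.length - i.val) % 2},
        x ^ (hd n.1) / ∏ i, (n.1 i : ℝ) ^ k.get i = (∑' n, ENNReal.ofReal (x ^ n) * Cf k n 0).toReal := by
  classical
  rw [← tup k (fun n => ENNReal.ofReal (x ^ n)), ENNReal.toReal_mul]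
  refine congrArg₂ (· * ·) (by simp) ?_
  · have h : (∑' n : Fin k.length → ℕ, if Pd k.length n then
      ENNReal.ofReal (x ^ hd n) * ∏ i, ENNReal.ofReal (1 / (n i : ℝ) ^ k.get i) else 0) =
      ∑' n : {n : Fin k.length → ℕ // Pd k.length n}, ENNReal.ofReal (x ^ (hd n.1) / ∏ i, (n.1 i : ℝ) ^ k.get i) := by
      have h2 := tsum_subtype {n : Fin k.length → ℕ | Pd k.length n} (fun n => ENNReal.ofReal (x ^ (hd n) / ∏ i, (n i : ℝ) ^ k.get i))
      refine Eq.trans ?_ h2.symm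
      congr 1; ext n
      simp only [Set.indicator, Set.mem_ofPred_eq]
      split_ifs
      · rw [← ENNReal.ofReal_prod_of_nonneg (by intros; positivity), ← ENNReal.ofReal_mul (by positivity)]
        congr 1
        rw [Finset.prod_div_distrib]; simp [div_eq_mul_inv]
      · rfl
    rw [h, ENNReal.tsum_toReal_eq (by simp)]
    refine tsum_congr fun n => ?_
    rw [ENNReal.toReal_ofReal]
    have := n.2
    positivity

lemma MTV_eq (k : List ℕ) : MTV k = (∑' n, Cf k n 0).toReal := by
  have h := tup_real k 1 zero_le_one
  simp only [one_pow, ENNReal.ofReal_one, one_mul] at h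
  rw [← h, MTV]
  congr 2; ext n
  rw [Finset.prod_div_distrib]; simp

lemma AFn_eq_s10 (k : List ℕ) (hk : k ≠ []) {t : ℝ} (ht : 0 ≤ t) : AFn k (Real.tanh (t/2)) = (Af k t).toReal := by
  have hr : 0 < k.length := List.length_pos_iff.2 hk
  have h := tup_real k (th t) (th_nonneg ht)
  rw [Af, ← h, AFn, dif_pos hr]
  congr 2; ext n
  rw [hd, dif_pos hr]; rfl

lemma fromWord_cons (b : Bool) (w : List Bool) : fromWord (b :: w) = stp (fromWord w) (!b) := by
  cases b
  · simp only [fromWord, stp, Bool.not_false, if_true]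
  · simp [fromWord, stp]

lemma foldl_stp (w : List Bool) : w.foldl stp [1] = fromWord (w.reverse.map fun b => !b) := by
  induction w using List.reverseRecOn with
  | nil => rfl
  | append_singleton w b ih =>
    rw [List.foldl_append, ih]
    simp [fromWord_cons]

lemma toWord_cons (a : ℕ) (k : List ℕ) (hk : k ≠ []) :
    toWord (a :: k) = List.replicate (a-1) false ++ true :: toWord k := by
  cases k with
  | nil => exact absurd rfl hk
  | cons b k => rfl

lemma toWord_snoc (a : ℕ) : ∀ (k : List ℕ) (_ : k ≠ []),
    toWord (k ++ [a]) = toWord k ++ true :: List.replicate (a-1) false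
  | [], h => absurd rfl h
  | [b], _ => rfl
  | b :: c :: k, _ => by
    rw [List.cons_append, toWord_cons _ _ (by simp), toWord_snoc a (c :: k) (by simp), toWord_cons b _ (by simp)]
    simp

lemma toWord_rev : ∀ (k : List ℕ), toWord k.reverse = (toWord k).reverse
  | [] => rfl
  | [b] => by simp [toWord]
  | b :: c :: k => by
    rw [List.reverse_cons, toWord_snoc _ _ (by simp), toWord_rev (c :: k), toWord_cons b _ (by simp)]
    simp

lemma wd_eq : ∀ (k : List ℕ) (_ : k ≠ []), wd k = toWord k ++ [true]
  | [], h => absurd rfl h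
  | [b], _ => rfl
  | b :: c :: k, _ => by
    rw [wd, wd_eq (c :: k) (by simp), toWord_cons b _ (by simp)]
    simp

lemma final_list (k : List ℕ) (hk : k ≠ []) : (wd k).foldl stp [1] = plusOne (HDual k.reverse) := by
  rw [wd_eq k hk, List.foldl_append, foldl_stp, HDual, toWord_rev]
  have : ∀ l : List Bool, fromWord l ≠ [] := by
    intro l
    cases l with
    | nil => simp [fromWord]
    | cons b l => rw [fromWord_cons]; exact stp_ne _ _
  have h := this ((toWord k).reverse.map fun b => !b)
  revert h
  generalize fromWord ((toWord k).reverse.map fun b => !b) = l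
  intro h
  cases l with
  | nil => exact absurd rfl h
  | cons a l => rfl

lemma foldl_len : ∀ (w : List Bool) (l : List ℕ) (_ : l ≠ []), (w.foldl stp l).length = l.length + w.count false
  | [], l, _ => rfl
  | b :: w, l, h => by
    rw [List.foldl_cons, foldl_len w _ (stp_ne _ _)]
    cases b
    · simp [stp]; omega
    · cases l with
      | nil => exact absurd rfl h
      | cons a l => simp [stp]

lemma count_wd : ∀ (k : List ℕ) (_ : ∀ a ∈ k, 0 < a), (wd k).count false + k.length = k.sum
  | [], _ => rfl
  | a :: k, h => by
    have := count_wd k (fun b hb => h b (by simp [hb]))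
    have := h a (by simp)
    simp [wd, List.count_append]
    omega

lemma psi_eq (k : List ℕ) (hk : k ≠ []) (hpos : ∀ a ∈ k, 0 < a) (m : ℕ) :
    psiKT (m + 1) k = ((∫⁻ t in Set.Ioi 0, ENNReal.ofReal (1 / Real.sinh t) *
      ENNReal.ofReal (t ^ m / (m.factorial : ℝ)) * Af k t).toReal : ℂ) := by
  unfold psiKT
  have hG : Complex.Gamma (m + 1) = ((m.factorial : ℝ) : ℂ) := by
    rw [Complex.Gamma_nat_eq_factorial]; simp
  have hm : Measurable (Af k) := by
    unfold Af
    exact Measurable.tsum fun n => ((th_cont.measurable.pow_const n).ennreal_ofReal).mul_const _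
  have e1 : ∫ t in Set.Ioi (0:ℝ), (t : ℂ) ^ ((m:ℂ) + 1 - 1) * ((AFn k (Real.tanh (t / 2)) / Real.sinh t : ℝ) : ℂ)
     = ∫ t in Set.Ioi (0:ℝ), (((m.factorial : ℝ) * (ENNReal.ofReal (1 / Real.sinh t) *
      ENNReal.ofReal (t ^ m / (m.factorial : ℝ)) * Af k t).toReal : ℝ) : ℂ) := by
    refine setIntegral_congr_fun measurableSet_Ioi (fun t ht => ?_)
    have ht0 : 0 < t := ht
    have hsh := Real.sinh_pos_iff.2 ht0
    rw [AFn_eq_s10 k hk ht0.le, add_sub_cancel_right, Complex.cpow_natCast, ENNReal.toReal_mul, ENNReal.toReal_mul,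
      ENNReal.toReal_ofReal (by positivity), ENNReal.toReal_ofReal (by positivity), ← Complex.ofReal_pow, ← Complex.ofReal_mul]
    congr 1
    have : (m.factorial:ℝ) ≠ 0 := by positivity
    field_simp
  rw [e1, integral_complex_ofReal, integral_const_mul, hG]
  have hmm : Measurable (fun t => ENNReal.ofReal (1 / Real.sinh t) *
      ENNReal.ofReal (t ^ m / (m.factorial : ℝ)) * Af k t) := by
    refine Measurable.mul (Measurable.mul (om_meas false) ?_) hm
    exact ((measurable_id.pow_const m).div_const _).ennreal_ofReal
  rw [integral_toReal hmm.aemeasurable]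
  · push_cast
    have : (m.factorial:ℂ) ≠ 0 := by exact_mod_cast Nat.factorial_ne_zero m
    field_simp
  · exact ae_lt_top hmm (L_fin k hk hpos m)

lemma psi_main (k : List ℕ) (hk : k ≠ []) (hpos : ∀ a ∈ k, 0 < a) (m : ℕ) (l : List ℕ)
    (hl : (wd k).foldl stp [1] = l) :
    psiKT (m + 1) k = ∑ j ∈ Finset.Nat.antidiagonalTuple l.length m,
        ((∏ i : Fin l.length, Nat.choose (l.getD (i : ℕ) 0 + j i - 1) (j i) : ℕ) : ℂ) *
          ((MTV (List.ofFn fun i : Fin l.length => l.getD (i : ℕ) 0 + j i) : ℝ) : ℂ) := by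
  rw [psi_eq k hk hpos m]
  have hL := L_fin k hk hpos m
  have hE : ∫⁻ t in Set.Ioi 0, ENNReal.ofReal (1 / Real.sinh t) *
      ENNReal.ofReal (t ^ m / (m.factorial : ℝ)) * Af k t = Ef l m 0 := by
    rw [← hl, ← pairing0]
    refine setLIntegral_congr_fun measurableSet_Ioi (fun t ht => ?_)
    rw [Af_wd k hpos t (le_of_lt ht)]
  have hS : Ef l m 0 = ∑ j ∈ Finset.Nat.antidiagonalTuple l.length m,
        ((∏ i : Fin l.length, Nat.choose (l.getD (i : ℕ) 0 + j i - 1) (j i) : ℕ) : ENNReal) *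
          ∑' n, Cf (List.ofFn fun i : Fin l.length => l.getD (i : ℕ) 0 + j i) n 0 := by
    rw [Ef_at_zero]
    simp only [Cf_tuple l _ m]
    rw [Summable.tsum_finsetSum (fun _ _ => ENNReal.summable)]
    simp only [ENNReal.tsum_mul_left]
  rw [hE, hS] at hL
  rw [hE, hS, ENNReal.toReal_sum (fun j hj => (ENNReal.sum_ne_top.1 hL) j hj)]
  push_cast
  refine Finset.sum_congr rfl fun j hj => ?_
  rw [ENNReal.toReal_mul, MTV_eq]
  push_cast
  simp

end Helpers

theorem stmt10 (k : List ℕ) (hk : k ≠ []) (hkpos : ∀ a ∈ k, 0 < a) (m : ℕ) :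
    psiKT (m + 1) k =
      ∑ j ∈ Finset.Nat.antidiagonalTuple (k.sum + 1 - k.length) m,
        ((∏ i : Fin (k.sum + 1 - k.length), Nat.choose
            ((plusOne (HDual k.reverse)).getD (i : ℕ) 0 + j i - 1) (j i) : ℕ) : ℂ) *
          ((MTV (List.ofFn fun i : Fin (k.sum + 1 - k.length) =>
            (plusOne (HDual k.reverse)).getD (i : ℕ) 0 + j i) : ℝ) : ℂ) := by
  have hl := final_list k hk
  have hN : k.sum + 1 - k.length = (plusOne (HDual k.reverse)).length := by
    rw [← hl, foldl_len _ _ (by simp), ← count_wd k hkpos, List.length_singleton]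
    omega
  rw [hN]
  exact psi_main k hk hkpos m _ hl
end
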